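/- arXiv:0801.4336 — 2 statements merged into one kernel-verified Lean document; each statement's English description precedes it below -/
import Mathlib

section
/- Let A ∈ ℚ^{m×n} be a matrix of full column rank defining a parametric polyhedron P of finite lattice width, and let φ be the maximum size of a column of A. Then there exist a natural number t with t ≤ 2 m^{2n} (2n+1)ⁿ (24 n⁵ φ)^{n−1} and triples (F_i, G_i, c_i), i = 1,…,t, where F_i, G_i : ℝ^m → ℝⁿ are rational linear maps and c_i ∈ ℤⁿ is a nonzero integral row vector, such that for every b ∈ ℝ^m with P_b nonempty: (a) for all i, c_i G_i b ≤ min{c_i·x : x ∈ P_b} ≤ max{c_i·x : x ∈ P_b} ≤ c_i F_i b, and (b) w(P_b) = min over i of c_i (F_i − G_i) b; in particular the lattice width of P_b is attained along c_i for some i. -/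
open Matrix Set

noncomputable def widthAlong {n : ℕ} (K : Set (Fin n → ℝ)) (c : Fin n → ℝ) : EReal :=
  sSup ((fun x => ((∑ i, c i * x i : ℝ) : EReal)) '' K) -
    sInf ((fun x => ((∑ i, c i * x i : ℝ) : EReal)) '' K)

noncomputable def latticeWidth {n : ℕ} (K : Set (Fin n → ℝ)) : EReal :=
  sInf {w : EReal | ∃ c : Fin n → ℤ, c ≠ 0 ∧ w = widthAlong K (fun i => (c i : ℝ))}

def Pb {m n : ℕ} (A : Matrix (Fin m) (Fin n) ℚ) (b : Fin m → ℝ) : Set (Fin n → ℝ) :=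
  {x | ∀ i, (∑ j, (A i j : ℝ) * x j) ≤ b i}

/-- The binary encoding size of a rational number `p/q` (in lowest terms, `q > 0`):
`1 + ⌈log(|p|+1)⌉ + ⌈log(q+1)⌉`. -/
def ratSize (α : ℚ) : ℕ :=
  1 + Nat.clog 2 (α.num.natAbs + 1) + Nat.clog 2 (α.den + 1)

/-- The size of a rational vector: its length plus the sum of the sizes of its entries. -/
def vecSize {m : ℕ} (a : Fin m → ℚ) : ℕ := m + ∑ i, ratSize (a i)

/-- A rational linear map `ℝ^m → ℝⁿ`, given by a rational matrix, applied to `b`. -/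
def applyRat {m n : ℕ} (F : Matrix (Fin n) (Fin m) ℚ) (b : Fin m → ℝ) : Fin n → ℝ :=
  (F.map ((↑) : ℚ → ℝ)).mulVec b

/-!
By LP duality, if `c` is bounded above on a nonempty `P_b` then `c` is a nonnegative combination of
`n` linearly independent rows `f` of `A`, and the maximum of `c` is its value at the solution `F b`
of the equations `f`. Doing the same for `-c`, the directions of finite width lie in finitely many
pointed cones, on each of which the width of `P_b` along `c` is the linear functional
`c ↦ c (F - G) b`. It remains to find, in each cone, a finite set of nonzero lattice points that
contains a minimizer of every linear functional `ℓ` nonnegative on the cone. Pulling triangulations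
reduce this to simplicial cones, where `ℓ` attains its minimum at a lattice point `v` whose
coefficients with respect to the generators are at most one. If `s` is another lattice point of the
simplicial cone such that `2 v - s` is nonzero and again in the cone, then `ℓ v ≤ ℓ (2 v - s)`, so
`s` is a minimizer as well. Such an `s` can be chosen depending only on the bit lengths of all but
one of the coefficients of `v`, which leaves polynomially many candidates.
-/

section RatioTest

variable {ι K : Type*} [Finite ι] [Field K] [LinearOrder K] [IsStrictOrderedRing K]

theorem exists_ratio_test {y w : ι → K} (hy : 0 ≤ y) (hw : ∃ i, 0 < w i) :
    ∃ a, 0 < w a ∧ ∀ i, 0 ≤ w a * y i - y a * w i := by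
  classical
  have := Fintype.ofFinite ι
  obtain ⟨a, ha, hmin⟩ := (Finset.univ.filter fun i => 0 < w i).exists_min_image
    (fun i => y i / w i) (by simpa [Finset.Nonempty] using hw)
  simp only [Finset.mem_filter, Finset.mem_univ, true_and] at ha hmin
  refine ⟨a, ha, fun i => ?_⟩
  rcases le_or_gt (w i) 0 with hi | hi
  · linarith [mul_nonneg ha.le (hy i), mul_nonpos_of_nonneg_of_nonpos (hy a) hi]
  · linarith [(div_le_div_iff₀ ha hi).mp (hmin i hi)]

end RatioTest

section Farkas

variable {K : Type*} [Field K] [LinearOrder K] [IsStrictOrderedRing K]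

theorem mem_hull_of_nonneg_of_nonneg {ι V : Type*} [AddCommGroup V] [Module K V] (s : Finset ι)
    (a : ι → Module.Dual K V) (c : Module.Dual K V) (h : ∀ x, (∀ i ∈ s, 0 ≤ a i x) → 0 ≤ c x) :
    c ∈ PointedCone.hull K (a '' s) := by
  classical
  induction s using Finset.induction_on generalizing a c with
  | empty =>
    have hc : c = 0 := LinearMap.ext fun x =>
      le_antisymm (by simpa using h (-x) (by simp)) (h x (by simp))
    exact hc ▸ zero_mem _
  | insert k s _ ih =>
    have hs : PointedCone.hull K (a '' s) ≤ PointedCone.hull K (a '' ↑(insert k s)) :=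
      Submodule.span_mono (image_mono (by simp))
    by_cases hc : ∀ x, (∀ i ∈ s, 0 ≤ a i x) → 0 ≤ c x
    · exact hs (ih a c hc)
    push Not at hc
    obtain ⟨x₀, hx₀, hcx₀⟩ := hc
    have hk₀ : a k x₀ < 0 := by
      by_contra! hk
      exact (h x₀ (by simpa using ⟨hk, hx₀⟩)).not_gt hcx₀
    obtain ⟨x, hx, hcx, hk⟩ : ∃ x, (∀ i ∈ s, 0 ≤ a i x) ∧ c x < 0 ∧ a k x = -1 := by
      refine ⟨(-a k x₀)⁻¹ • x₀, fun i hi => ?_, ?_, ?_⟩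
      · simpa using mul_nonneg (inv_nonneg.mpr (neg_pos.mpr hk₀).le) (hx₀ i hi)
      · simpa using mul_neg_of_pos_of_neg (inv_pos.mpr (neg_pos.mpr hk₀)) hcx₀
      · simp [hk₀.ne]
    -- Project along `x` onto the hyperplane `a k = 0`, where `k` imposes no constraint.
    have hproj : c + c x • a k ∈ PointedCone.hull K ((fun i => a i + a i x • a k) '' s) := by
      refine ih _ _ fun z hz => ?_
      have := h (z + a k z • x) (by simpa [hk, mul_comm] using hz)
      simpa [mul_comm] using this
    have hle : PointedCone.hull K ((fun i => a i + a i x • a k) '' s) ≤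
        PointedCone.hull K (a '' ↑(insert k s)) := by
      refine Submodule.span_le.mpr ?_
      rintro _ ⟨i, hi, rfl⟩
      exact add_mem (hs (PointedCone.subset_hull ⟨i, hi, rfl⟩)) (PointedCone.smul_mem _ (hx i hi)
        (PointedCone.subset_hull ⟨k, by simp, rfl⟩))
    have hmem := add_mem (hle hproj) (PointedCone.smul_mem _ (neg_pos.mpr hcx).le
      (PointedCone.subset_hull (s := a '' ↑(insert k s)) ⟨k, by simp, rfl⟩))
    simpa using hmem

end Farkas

section LinearProgramming

variable {I J K : Type*} [Fintype J] [Field K] [LinearOrder K] [IsStrictOrderedRing K]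

theorem dotProduct_nonpos_of_mulVec_nonpos {A : Matrix I J K} {b : I → K} {c : J → K} {δ : K}
    {x₀ d : J → K} (hx₀ : A *ᵥ x₀ ≤ b) (hδ : ∀ x, A *ᵥ x ≤ b → c ⬝ᵥ x ≤ δ) (hd : A *ᵥ d ≤ 0) :
    c ⬝ᵥ d ≤ 0 := by
  by_contra! hpos
  obtain ⟨t, ht, htδ⟩ : ∃ t : K, 0 ≤ t ∧ δ < c ⬝ᵥ x₀ + t * (c ⬝ᵥ d) := by
    refine ⟨(δ - c ⬝ᵥ x₀ + 1) / (c ⬝ᵥ d), div_nonneg ?_ hpos.le, ?_⟩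
    · linarith [hδ x₀ hx₀]
    · rw [div_mul_cancel₀ _ hpos.ne']
      linarith
  refine (hδ (x₀ + t • d) ?_).not_gt (by simpa [dotProduct_add] using htδ)
  rw [mulVec_add, mulVec_smul]
  simpa using add_le_add hx₀ (smul_nonpos_of_nonneg_of_nonpos ht hd)

variable [Fintype I]

theorem exists_nonneg_vecMul_eq {A : Matrix I J K} {b : I → K} {c : J → K}
    {δ : K} {x₀ : J → K} (hx₀ : A *ᵥ x₀ ≤ b) (hδ : ∀ x, A *ᵥ x ≤ b → c ⬝ᵥ x ≤ δ) :
    ∃ y : I → K, 0 ≤ y ∧ y ᵥ* A = c ∧ y ⬝ᵥ b ≤ δ := by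
  classical
  -- Homogenize: on pairs `(x, s)` the inequalities become `A x ≤ s b`, `0 ≤ s`.
  let a : Option I → Module.Dual K ((J → K) × K) := fun o =>
    o.elim (LinearMap.snd K _ _) fun i => (dotProductEquiv K J (-A i)).coprod (b i • LinearMap.id)
  have hfar := mem_hull_of_nonneg_of_nonneg Finset.univ a
    ((dotProductEquiv K J (-c)).coprod (δ • LinearMap.id)) fun ⟨x, s⟩ hxs => by
      have hs : 0 ≤ s := by simpa [a] using hxs none
      have hx : A *ᵥ x ≤ s • b := fun i => by
        simpa [a, mulVec, mul_comm] using hxs (some i)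
      suffices c ⬝ᵥ x ≤ δ * s by simpa using this
      rcases hs.eq_or_lt with rfl | hs
      · simpa using dotProduct_nonpos_of_mulVec_nonpos hx₀ hδ (by simpa using hx)
      · have := hδ (s⁻¹ • x) (by
          rw [mulVec_smul]
          simpa [hs.ne'] using smul_le_smul_of_nonneg_left hx (inv_nonneg.mpr hs.le))
        rwa [dotProduct_smul, smul_eq_mul, inv_mul_le_iff₀ hs, mul_comm] at this
  rw [Finset.coe_univ, image_univ] at hfar
  obtain ⟨y, hy0, hy⟩ : ∃ y : Option I → K, 0 ≤ y ∧ ∑ o, y o • a o = _ :=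
    let ⟨y, hy⟩ := (Submodule.mem_span_range_iff_exists_fun _).mp hfar
    ⟨fun o => y o, fun o => (y o).2, hy⟩
  refine ⟨fun i => y (some i), fun i => hy0 (some i), ?_, ?_⟩
  · funext j
    have := LinearMap.congr_fun hy (Pi.single j 1, 0)
    simpa [a, vecMul, dotProduct, Fintype.sum_option, Pi.single_apply] using this
  · have hδy : y none + ∑ i, y (some i) * b i = δ := by
      simpa [a, Fintype.sum_option] using LinearMap.congr_fun hy (0, 1)
    have := hy0 none
    simp only [dotProduct, Pi.zero_apply] at this ⊢
    linarith

theorem exists_relation_of_not_linearIndepOn {V : Type*} [AddCommGroup V] [Module K V] {v : I → V}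
    {b : I → K} (hb : ∀ w : I → K, 0 ≤ w → ∑ i, w i • v i = 0 → 0 ≤ w ⬝ᵥ b) {S : Set I}
    (hS : ¬LinearIndepOn K v S) :
    ∃ w : I → K, Function.support w ⊆ S ∧ ∑ i, w i • v i = 0 ∧ 0 ≤ w ⬝ᵥ b ∧ ∃ i, 0 < w i := by
  obtain ⟨u, huS, huv, hu⟩ := linearDepOn_iff'.mp hS
  rw [Finsupp.linearCombination_apply, Finsupp.sum_fintype _ _ (by simp)] at huv
  rw [Finsupp.mem_supported, ← Finsupp.fun_support_eq] at huS
  obtain ⟨w, hwS, hwv, hw, hwb⟩ : ∃ w : I → K, Function.support w ⊆ S ∧ ∑ i, w i • v i = 0 ∧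
      w ≠ 0 ∧ 0 ≤ w ⬝ᵥ b := by
    rcases le_total 0 (⇑u ⬝ᵥ b) with h | h
    · exact ⟨u, huS, huv, by simpa using hu, h⟩
    · exact ⟨-u, by simpa using huS, by simpa using huv, by simpa using hu, by simpa using h⟩
  by_cases hpos : ∃ i, 0 < w i
  · exact ⟨w, hwS, hwv, hwb, hpos⟩
  -- If `w ≤ 0`, then `-w ≥ 0` has nonnegative cost too, so both costs vanish.
  push Not at hpos
  refine ⟨-w, by simpa using hwS, by simpa using hwv, hb _ (fun i => by simpa using hpos i)
    (by simpa using hwv), ?_⟩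
  obtain ⟨i, hi⟩ := Function.ne_iff.mp hw
  exact ⟨i, by simpa using (hpos i).lt_of_ne hi⟩

theorem exists_nonneg_linearIndepOn_support {V : Type*} [AddCommGroup V] [Module K V] {v : I → V}
    {b : I → K} (hb : ∀ w : I → K, 0 ≤ w → ∑ i, w i • v i = 0 → 0 ≤ w ⬝ᵥ b) {y : I → K}
    (hy : 0 ≤ y) :
    ∃ z : I → K, 0 ≤ z ∧ ∑ i, z i • v i = ∑ i, y i • v i ∧ z ⬝ᵥ b ≤ y ⬝ᵥ b ∧
      LinearIndepOn K v (Function.support z) := by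
  induction hk : (Function.support y).ncard using Nat.strong_induction_on generalizing y with
  | _ k ih =>
  by_cases hdep : LinearIndepOn K v (Function.support y)
  · exact ⟨y, hy, rfl, le_rfl, hdep⟩
  obtain ⟨w, hwy, hwv, hwb, a₀, ha₀⟩ := exists_relation_of_not_linearIndepOn hb hdep
  obtain ⟨a, ha, hratio⟩ := exists_ratio_test hy ⟨a₀, ha₀⟩
  set t := y a / w a with ht
  have hz : 0 ≤ y - t • w := fun i => by
    have := div_nonneg (hratio i) ha.le
    rw [sub_div, mul_div_cancel_left₀ _ ha.ne', mul_div_right_comm] at this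
    simpa using this
  have hsub : Function.support (y - t • w) ⊂ Function.support y := by
    have hle : Function.support (y - t • w) ⊆ Function.support y :=
      (Function.support_sub _ _).trans
        (union_subset subset_rfl ((Function.support_const_smul_subset _ _).trans hwy))
    refine (Set.ssubset_iff_of_subset hle).mpr ⟨a, hwy ha.ne', ?_⟩
    · simp [ht, ha.ne']
  obtain ⟨z, hz0, hzv, hzb, hzi⟩ :=
    ih _ (hk ▸ Set.ncard_lt_ncard hsub (Set.toFinite _)) hz rfl
  refine ⟨z, hz0, hzv.trans ?_, hzb.trans ?_, hzi⟩
  · simp [sub_smul, Finset.sum_sub_distrib, mul_smul, ← Finset.smul_sum, hwv]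
  · have := mul_nonneg (div_nonneg (hy a) ha.le) hwb
    simpa [sub_dotProduct] using this

end LinearProgramming

section RowBases

theorem injective_of_submatrix_det_ne_zero {I J R : Type*} [Fintype J] [DecidableEq J] [CommRing R]
    {A : Matrix I J R} {f : J → I} (hf : (A.submatrix f id).det ≠ 0) : Function.Injective f :=
  fun i j hij => by
    by_contra hne
    exact hf (det_zero_of_row_eq hne (by ext; simp [hij]))

variable {I J K : Type*} [Fintype J] [DecidableEq J] [Field K]

theorem exists_submatrix_det_ne_zero {A : Matrix I J K} {s t : Set I}
    (hs : LinearIndepOn K A.row s) (hst : s ⊆ t) (ht : Submodule.span K (A.row '' t) = ⊤) :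
    ∃ f : J → I, (∀ j, f j ∈ t) ∧ s ⊆ range f ∧ (A.submatrix f id).det ≠ 0 := by
  obtain ⟨b, hbt, hsb, hspan, hb⟩ := exists_linearIndepOn_extension hs hst
  have hbtop : ⊤ ≤ Submodule.span K (range fun i : b => A.row i) := by
    rw [← image_eq_range, ← ht]
    exact Submodule.span_le.mpr hspan
  let e : J ≃ b := (Pi.basisFun K J).indexEquiv (Module.Basis.mk hb hbtop)
  refine ⟨fun j => e j, fun j => hbt (e j).2, fun i hi => ⟨e.symm ⟨i, hsb hi⟩, by simp⟩, ?_⟩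
  have hrows : LinearIndependent K (A.submatrix (fun j => (e j : I)) id).row :=
    hb.comp e e.injective
  rw [linearIndependent_rows_iff_isUnit, isUnit_iff_isUnit_det] at hrows
  exact hrows.ne_zero

end RowBases

section BasicSolutions

variable {I J K : Type*} [DecidableEq I] [Fintype J] [DecidableEq J] [Field K]

/-- The matrix of the linear map sending `b` to `A_f⁻¹ b_f`, the solution of the square system
formed by the rows `f` of `A x = b`. It is only meaningful if `A_f` is invertible. -/
noncomputable def basicSolution (A : Matrix I J K) (f : J → I) : Matrix J I K :=
  (A.submatrix f id)⁻¹ * (1 : Matrix I I K).submatrix f id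

theorem dotProduct_basicSolution_mulVec [Fintype I] (A : Matrix I J K) (f : J → I) (b : I → K)
    (c : J → K) : c ⬝ᵥ (basicSolution A f *ᵥ b) = (c ᵥ* (A.submatrix f id)⁻¹) ⬝ᵥ (b ∘ f) := by
  rw [basicSolution, ← mulVec_mulVec, dotProduct_mulVec]
  exact congrArg (_ ⬝ᵥ · ∘ f) (one_mulVec b)

variable {L : Type*} [Field L] (φ : K →+* L)

theorem inv_map_eq_map_inv (B : Matrix J J K) : (B.map φ)⁻¹ = B⁻¹.map φ := by
  rw [inv_def, inv_def, ← RingHom.mapMatrix_apply, ← RingHom.map_det, ← RingHom.map_adjugate,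
    Ring.inverse_eq_inv', ← map_inv₀]
  ext i j
  simp

theorem basicSolution_map (A : Matrix I J K) (f : J → I) :
    basicSolution (A.map φ) f = (basicSolution A f).map φ := by
  rw [basicSolution, basicSolution, Matrix.map_mul, submatrix_map, inv_map_eq_map_inv,
    ← submatrix_map, Matrix.map_one _ (map_zero φ) (map_one φ)]

end BasicSolutions

section Bases

variable {I J K : Type*} [Fintype I] [DecidableEq I] [Fintype J] [DecidableEq J] [Field K]
  [LinearOrder K] [IsStrictOrderedRing K]

theorem dotProduct_le_of_nonneg_vecMul_inv {A : Matrix I J K} {b : I → K} {c x : J → K} {f : J → I}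
    (hf : (A.submatrix f id).det ≠ 0) (hc : 0 ≤ c ᵥ* (A.submatrix f id)⁻¹) (hx : A *ᵥ x ≤ b) :
    c ⬝ᵥ x ≤ c ⬝ᵥ (basicSolution A f *ᵥ b) :=
  calc c ⬝ᵥ x = (c ᵥ* (A.submatrix f id)⁻¹) ⬝ᵥ (A.submatrix f id *ᵥ x) := by
        rw [dotProduct_mulVec, vecMul_vecMul, nonsing_inv_mul _ hf.isUnit, vecMul_one]
    _ ≤ (c ᵥ* (A.submatrix f id)⁻¹) ⬝ᵥ (b ∘ f) :=
        dotProduct_le_dotProduct_of_nonneg_left (fun j => hx (f j)) hc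
    _ = _ := (dotProduct_basicSolution_mulVec A f b c).symm

theorem exists_optimal_basis {A : Matrix I J K} (hA : Submodule.span K (range A.row) = ⊤)
    {b : I → K} {c : J → K} {δ : K} {x₀ : J → K} (hx₀ : A *ᵥ x₀ ≤ b)
    (hδ : ∀ x, A *ᵥ x ≤ b → c ⬝ᵥ x ≤ δ) :
    ∃ f : J → I, (A.submatrix f id).det ≠ 0 ∧ 0 ≤ c ᵥ* (A.submatrix f id)⁻¹ ∧
      c ⬝ᵥ (basicSolution A f *ᵥ b) ≤ δ := by
  obtain ⟨y, hy, hyA, hyb⟩ := exists_nonneg_vecMul_eq hx₀ hδ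
  have hcost : ∀ w : I → K, 0 ≤ w → ∑ i, w i • A.row i = 0 → 0 ≤ w ⬝ᵥ b := fun w hw hwA =>
    calc (0 : K) = w ⬝ᵥ (A *ᵥ x₀) := by
          rw [dotProduct_mulVec, vecMul_eq_sum, show ∑ i, w i • A i = 0 from hwA, zero_dotProduct]
      _ ≤ w ⬝ᵥ b := dotProduct_le_dotProduct_of_nonneg_left hx₀ hw
  obtain ⟨z, hz, hzA, hzb, hzi⟩ := exists_nonneg_linearIndepOn_support hcost hy
  obtain ⟨f, -, hzf, hf⟩ := exists_submatrix_det_ne_zero hzi (subset_univ _) (by simpa using hA)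
  have hoff : ∀ i ∉ range f, z i = 0 := fun i hi =>
    Function.notMem_support.mp fun h => hi (hzf h)
  have hinj := injective_of_submatrix_det_ne_zero hf
  have hzc : (z ∘ f) ᵥ* A.submatrix f id = c := by
    rw [← hyA, vecMul_eq_sum, vecMul_eq_sum, ← show _ = ∑ i, y i • A i from hzA]
    exact Fintype.sum_of_injective f hinj _ _ (by simp +contextual [hoff]) fun j => rfl
  have hc : c ᵥ* (A.submatrix f id)⁻¹ = z ∘ f := by
    rw [← hzc, vecMul_vecMul, mul_nonsing_inv _ hf.isUnit, vecMul_one]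
  refine ⟨f, hf, hc ▸ fun j => hz (f j), ?_⟩
  calc c ⬝ᵥ (basicSolution A f *ᵥ b) = z ⬝ᵥ b := by
        rw [dotProduct_basicSolution_mulVec, hc]
        exact Fintype.sum_of_injective f hinj _ _ (by simp +contextual [hoff]) fun j => rfl
    _ ≤ δ := hzb.trans hyb

end Bases

section FullColumnRank

variable {I J K L : Type*} [Finite I] [Field K] [Field L]

theorem span_range_row_eq_top_iff_rank [Fintype J] {A : Matrix I J K} :
    Submodule.span K (range A.row) = ⊤ ↔ A.rank = Fintype.card J := by
  have := Fintype.ofFinite I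
  rw [rank_eq_finrank_span_row, ← Module.finrank_fintype_fun_eq_card K]
  exact ⟨fun h => by rw [h, finrank_top], Submodule.eq_top_of_finrank_eq⟩

theorem span_range_row_map_eq_top [Finite J] {A : Matrix I J K}
    (hA : Submodule.span K (range A.row) = ⊤) (φ : K →+* L) :
    Submodule.span L (range (A.map φ).row) = ⊤ := by
  classical
  have := Fintype.ofFinite I
  have := Fintype.ofFinite J
  rw [← range_vecMulLinear, LinearMap.range_eq_top] at hA ⊢
  obtain ⟨B, hB⟩ := vecMul_surjective_iff_exists_left_inverse.mp hA
  exact vecMul_surjective_iff_exists_left_inverse.mpr ⟨B.map φ, by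
    rw [← Matrix.map_mul, hB, Matrix.map_one _ (map_zero φ) (map_one φ)]⟩

theorem span_range_row_map_eq_top_of_injective [Fintype J] {R : Type*} [CommRing R] [Algebra R K]
    [IsFractionRing R K] {M : Matrix I J R} (hM : Function.Injective M.mulVec) :
    Submodule.span K (range (M.map (algebraMap R K)).row) = ⊤ := by
  have := Fintype.ofFinite I
  rw [span_range_row_eq_top_iff_rank, ← rank_transpose]
  have hcol : LinearIndependent R (M.map (algebraMap R K)).col :=
    (mulVec_injective_iff.mp hM).map' ((Algebra.linearMap R K).compLeft I)
      (LinearMap.ker_eq_bot.mpr fun u v huv => funext fun i =>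
        IsFractionRing.injective R K (congrFun huv i))
  exact ((LinearIndependent.iff_fractionRing R K).mp hcol).rank_matrix

theorem exists_submatrix_det_ne_zero_of_injective [Fintype J] [DecidableEq J] {R : Type*}
    [CommRing R] [IsDomain R] {M : Matrix I J R} {t : Set I}
    (hM : ∀ x, (∀ i ∈ t, (M *ᵥ x) i = 0) → x = 0) :
    ∃ f : J → I, (∀ j, f j ∈ t) ∧ (M.submatrix f id).det ≠ 0 := by
  have hinj : Function.Injective (M.submatrix ((↑) : t → I) id).mulVec :=
    (injective_iff_map_eq_zero (M.submatrix ((↑) : t → I) id).mulVecLin).mpr fun x hx =>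
      hM x fun i hi => congrFun hx ⟨i, hi⟩
  have hspan := span_range_row_map_eq_top_of_injective (K := FractionRing R) hinj
  obtain ⟨f, hft, -, hf⟩ := exists_submatrix_det_ne_zero
    (A := M.map (algebraMap R (FractionRing R))) (linearIndepOn_empty _ _) (empty_subset t)
    (by rwa [image_eq_range])
  refine ⟨f, hft, fun h => hf ?_⟩
  rw [submatrix_map, ← RingHom.mapMatrix_apply, ← RingHom.map_det, h, map_zero]

end FullColumnRank

section DyadicNet

theorem lt_two_mul_of_size_eq {a b : ℕ} (h : a.size = b.size) (hb : b ≠ 0) : a < 2 * b :=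
  calc a < 2 ^ b.size := h ▸ Nat.lt_size_self a
    _ = 2 * 2 ^ (b.size - 1) := by
        rw [← pow_succ', Nat.sub_add_cancel (Nat.size_pos.mpr (Nat.pos_of_ne_zero hb))]
    _ ≤ 2 * b := Nat.mul_le_mul_left 2
        (Nat.lt_size.mp (Nat.sub_one_lt (Nat.size_pos.mpr (Nat.pos_of_ne_zero hb)).ne'))

theorem exists_dyadic_net {n B : ℕ} (P : Set (Fin (n + 1) → ℕ)) (hB : ∀ N ∈ P, ∀ j, N j ≤ B) :
    ∃ T : Finset (Fin (n + 1) → ℕ), ↑T ⊆ P ∧ T.card ≤ (B.size + 1) ^ n ∧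
      ∀ N ∈ P, ∃ N' ∈ T, ∀ j, N' j = 0 ∨ N' j < 2 * N j := by
  classical
  -- Keep one `N` per vector of bit lengths of the first `n` coordinates, of least last coordinate.
  let cls (κ : Fin n → Fin (B.size + 1)) : Set (Fin (n + 1) → ℕ) :=
    {N ∈ P | ∀ j, (N j.castSucc).size = κ j}
  have hmin : ∀ κ, (cls κ).Nonempty → ∃ N' ∈ cls κ, ∀ N ∈ cls κ, N' (Fin.last n) ≤ N (Fin.last n) :=
    fun κ hκ => by
      obtain ⟨N', hN', h⟩ :=
        (wellFounded_lt.onFun (f := fun N : Fin (n + 1) → ℕ => N (Fin.last n))).has_min _ hκ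
      exact ⟨N', hN', fun N hN => not_lt.mp (h N hN)⟩
  choose! rep hrep hlast using hmin
  refine ⟨(Finset.univ.filter fun κ => (cls κ).Nonempty).image rep, ?_, ?_, fun N hN => ?_⟩
  · rw [Finset.coe_image]
    rintro _ ⟨κ, hκ, rfl⟩
    exact (hrep κ (by simpa using hκ)).1
  · exact (Finset.card_image_le.trans (Finset.card_le_univ _)).trans (by simp)
  · have hsize (j) : (N j).size < B.size + 1 := Nat.lt_succ_of_le (Nat.size_le_size (hB N hN j))
    have hNκ : N ∈ cls fun j => ⟨(N j.castSucc).size, hsize _⟩ := ⟨hN, fun _ => rfl⟩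
    refine ⟨_, Finset.mem_image_of_mem rep (by simpa using ⟨N, hNκ⟩), fun j => ?_⟩
    rw [or_iff_not_imp_left]
    intro hj
    induction j using Fin.lastCases with
    | last => have := hlast _ ⟨N, hNκ⟩ N hNκ; omega
    | cast j =>
      have hsz : (rep _ j.castSucc).size = (N j.castSucc).size := (hrep _ ⟨N, hNκ⟩).2 j
      refine lt_two_mul_of_size_eq hsz fun h0 => hj ?_
      exact Nat.size_eq_zero.mp (hsz.trans (by simp [h0]))

end DyadicNet

section MinimizingSets

variable {V : Type*}

/-- The data of a simplicial cone in `V` with generators `ray`, together with a common denominator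
`denom` for the coefficients of lattice points with respect to these generators. -/
structure LatticeSimplex (V : Type*) (k : ℕ) where
  denom : ℕ
  ray : Fin k → V

/-- A finite covering of `C` by simplicial cones: every element of `C` is a nonnegative combination
of the generators of one of the cones, with coefficients in `(1 / denom) ℕ` where `denom ≤ B`. -/
structure IsSimplicialCover [AddCommMonoid V] (C : AddSubmonoid V) (B : ℕ) {k : ℕ}
    (𝒮 : Finset (LatticeSimplex V k)) : Prop where
  denom_pos : ∀ σ ∈ 𝒮, 0 < σ.denom
  denom_le : ∀ σ ∈ 𝒮, σ.denom ≤ B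
  ray_mem : ∀ σ ∈ 𝒮, ∀ j, σ.ray j ∈ C
  exists_expansion : ∀ c ∈ C, ∃ σ ∈ 𝒮, ∃ N : Fin k → ℕ, σ.denom • c = ∑ j, N j • σ.ray j

/-- A finite set of nonzero elements of `C` on which every additive functional that is nonnegative
on `C` attains its minimum over the nonzero elements of `C`. -/
structure IsMinimizingSet [AddCommMonoid V] (C : AddSubmonoid V) (T : Finset V) : Prop where
  mem : ∀ s ∈ T, s ∈ C
  ne_zero : ∀ s ∈ T, s ≠ 0
  exists_le : ∀ ℓ : V →+ ℝ, (∀ c ∈ C, 0 ≤ ℓ c) → ∀ c ∈ C, c ≠ 0 → ∃ s ∈ T, ℓ s ≤ ℓ c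

/-- The abstract properties of the set of lattice points of a pointed rational cone. -/
structure IsLatticeCone [AddCommGroup V] (C : AddSubmonoid V) : Prop where
  saturated : ∀ {d : ℕ} {x : V}, 0 < d → d • x ∈ C → x ∈ C
  eq_zero_of_neg_mem : ∀ {x : V}, x ∈ C → -x ∈ C → x = 0

/-- The nonzero elements of `C` whose coefficients with respect to the generators of `σ` lie in
`[0, 1]`. -/
def LatticeSimplex.box [AddCommMonoid V] (C : AddSubmonoid V) {k : ℕ} (σ : LatticeSimplex V k) :
    Set V :=
  {c | c ∈ C ∧ c ≠ 0 ∧ ∃ N : Fin k → ℕ, (∀ j, N j ≤ σ.denom) ∧ σ.denom • c = ∑ j, N j • σ.ray j}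

variable [AddCommGroup V] {C : AddSubmonoid V}

theorem IsLatticeCone.eq_zero_of_nsmul_eq_zero (hC : IsLatticeCone C) {d : ℕ} {x : V} (hd : 0 < d)
    (hx : d • x = 0) : x = 0 :=
  hC.eq_zero_of_neg_mem (hC.saturated hd (hx ▸ zero_mem C)) (hC.saturated hd (by simp [hx]))

theorem IsLatticeCone.eq_zero_of_sum_eq_zero (hC : IsLatticeCone C) {ι : Type*} [Fintype ι]
    {x : ι → V} (hx : ∀ i, x i ∈ C) (hsum : ∑ i, x i = 0) (i : ι) : x i = 0 := by
  classical
  refine hC.eq_zero_of_neg_mem (hx i) ?_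
  rw [← Finset.add_sum_erase _ _ (Finset.mem_univ i)] at hsum
  exact neg_eq_of_add_eq_zero_right hsum ▸ sum_mem fun j _ => hx j

namespace LatticeSimplex

variable {k : ℕ} {σ : LatticeSimplex V k}

theorem mem_of_nsmul_eq_sum (hC : IsLatticeCone C) (hσ : 0 < σ.denom) (hray : ∀ j, σ.ray j ∈ C)
    {x : V} {N : Fin k → ℕ} (hx : σ.denom • x = ∑ j, N j • σ.ray j) : x ∈ C :=
  hC.saturated hσ (hx ▸ sum_mem fun j _ => nsmul_mem (hray j) _)

theorem finite_box (hC : IsLatticeCone C) (hσ : 0 < σ.denom) : (σ.box C).Finite := by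
  have hcover : σ.box C ⊆ ⋃ N ∈ Set.Iic fun _ : Fin k => σ.denom,
      {c | σ.denom • c = ∑ j, N j • σ.ray j} := by
    rintro c ⟨-, -, N, hN, hc⟩
    exact mem_biUnion (x := N) hN hc
  refine (Finite.biUnion (finite_Iic _) fun N _ => Set.Subsingleton.finite ?_).subset hcover
  intro c hc c' hc'
  refine sub_eq_zero.mp (hC.eq_zero_of_nsmul_eq_zero hσ ?_)
  rw [smul_sub, show σ.denom • c = _ from hc, show σ.denom • c' = _ from hc', sub_self]

theorem exists_mem_box_sub_mem (hC : IsLatticeCone C) (hσ : 0 < σ.denom)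
    (hray : ∀ j, σ.ray j ∈ C) {c : V} (hcC : c ∈ C) (hc0 : c ≠ 0) {N : Fin k → ℕ}
    (hc : σ.denom • c = ∑ j, N j • σ.ray j) : ∃ s ∈ σ.box C, c - s ∈ C := by
  classical
  by_cases h : ∃ j, σ.denom < N j ∧ σ.ray j ≠ 0
  · obtain ⟨j, hj, hj0⟩ := h
    refine ⟨σ.ray j, ⟨hray j, hj0, Pi.single j σ.denom, fun i => ?_, ?_⟩, ?_⟩
    · rcases eq_or_ne i j with rfl | hij <;> simp [*]
    · simp [Pi.single_apply]
    · refine mem_of_nsmul_eq_sum hC hσ hray (N := Function.update N j (N j - σ.denom)) ?_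
      have hrest : ∑ i ∈ Finset.univ.erase j,
          Function.update N j (N j - σ.denom) i • σ.ray i =
            ∑ i ∈ Finset.univ.erase j, N i • σ.ray i := Finset.sum_congr rfl fun i hi => by
        rw [Function.update_of_ne (Finset.ne_of_mem_erase hi)]
      rw [smul_sub, hc, ← Finset.add_sum_erase _ _ (Finset.mem_univ j),
        ← Finset.add_sum_erase _ _ (Finset.mem_univ j), hrest, Function.update_self,
        sub_nsmul _ hj.le]
      abel
  · push Not at h
    refine ⟨c, ⟨hcC, hc0, fun j => min (N j) σ.denom, fun j => min_le_right _ _, ?_⟩, by simp⟩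
    refine hc.trans (Finset.sum_congr rfl fun j _ => ?_)
    rcases le_or_gt (N j) σ.denom with hj | hj
    · simp [hj]
    · simp [h j hj]

theorem two_nsmul_sub_mem (hC : IsLatticeCone C) (hσ : 0 < σ.denom) (hray : ∀ j, σ.ray j ∈ C)
    {v s : V} (hv0 : v ≠ 0) {N N' : Fin k → ℕ} (hv : σ.denom • v = ∑ j, N j • σ.ray j)
    (hs : σ.denom • s = ∑ j, N' j • σ.ray j) (hN : ∀ j, N' j = 0 ∨ N' j < 2 * N j) :
    2 • v - s ∈ C ∧ 2 • v - s ≠ 0 := by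
  have hexp : σ.denom • (2 • v - s) = ∑ j, (2 * N j - N' j) • σ.ray j := by
    rw [smul_sub, smul_comm, hv, hs, Finset.smul_sum, ← Finset.sum_sub_distrib]
    refine Finset.sum_congr rfl fun j _ => ?_
    rw [sub_nsmul _ (by have := hN j; omega), mul_smul, sub_eq_add_neg]
  refine ⟨mem_of_nsmul_eq_sum hC hσ hray hexp, fun h0 => hv0 ?_⟩
  rw [h0, smul_zero] at hexp
  refine hC.eq_zero_of_nsmul_eq_zero hσ (hv.trans (Finset.sum_eq_zero fun j _ => ?_))
  have hj := hC.eq_zero_of_sum_eq_zero (fun j => nsmul_mem (hray j) _) hexp.symm j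
  rcases Nat.eq_zero_or_pos (2 * N j - N' j) with h | h
  · have : N j = 0 := by have := hN j; omega
    simp [this]
  · simp [hC.eq_zero_of_nsmul_eq_zero h hj]

theorem exists_finset_two_nsmul_sub_mem {n B : ℕ} {σ : LatticeSimplex V (n + 1)}
    (hC : IsLatticeCone C) (hσ : 0 < σ.denom) (hσB : σ.denom ≤ B) (hray : ∀ j, σ.ray j ∈ C) :
    ∃ T : Finset V, ↑T ⊆ σ.box C ∧ T.card ≤ (B.size + 1) ^ n ∧
      ∀ v ∈ σ.box C, ∃ s ∈ T, 2 • v - s ∈ C ∧ 2 • v - s ≠ 0 := by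
  classical
  obtain ⟨T, hTP, hTcard, hT⟩ := exists_dyadic_net (B := B)
    {N : Fin (n + 1) → ℕ | (∀ j, N j ≤ σ.denom) ∧
      ∃ c ∈ C, c ≠ 0 ∧ σ.denom • c = ∑ j, N j • σ.ray j} fun N hN j => (hN.1 j).trans hσB
  choose! p hpC hp0 hp using fun N (hN : N ∈ T) => (hTP hN).2
  refine ⟨T.image p, ?_, Finset.card_image_le.trans hTcard, ?_⟩
  · rw [Finset.coe_image]
    rintro _ ⟨N, hN, rfl⟩
    exact ⟨hpC N hN, hp0 N hN, N, (hTP hN).1, hp N hN⟩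
  · rintro v ⟨hvC, hv0, N, hN, hv⟩
    obtain ⟨N', hN'T, hN'⟩ := hT N ⟨hN, v, hvC, hv0, hv⟩
    exact ⟨p N', Finset.mem_image_of_mem p hN'T,
      two_nsmul_sub_mem hC hσ hray hv0 hv (hp N' hN'T) hN'⟩

end LatticeSimplex

theorem IsSimplicialCover.exists_isMinimizingSet {n B : ℕ}
    {𝒮 : Finset (LatticeSimplex V (n + 1))} (hC : IsLatticeCone C) (h𝒮 : IsSimplicialCover C B 𝒮) :
    ∃ T : Finset V, IsMinimizingSet C T ∧ T.card ≤ 𝒮.card * (B.size + 1) ^ n := by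
  classical
  choose! T hTbox hTcard hT using fun σ (hσ : σ ∈ 𝒮) =>
    LatticeSimplex.exists_finset_two_nsmul_sub_mem hC (h𝒮.denom_pos σ hσ)
      (h𝒮.denom_le σ hσ) (h𝒮.ray_mem σ hσ)
  have hbox : ∀ s ∈ 𝒮.biUnion T, ∃ σ : LatticeSimplex V (n + 1), s ∈ σ.box C := fun s hs => by
    obtain ⟨σ, hσ, hsσ⟩ := Finset.mem_biUnion.mp hs
    exact ⟨σ, hTbox σ hσ hsσ⟩
  refine ⟨𝒮.biUnion T, ⟨fun s hs => ?_, fun s hs => ?_, fun ℓ hℓ c hcC hc0 => ?_⟩,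
    Finset.card_biUnion_le_card_mul _ _ _ hTcard⟩
  · obtain ⟨σ, hσ⟩ := hbox s hs
    exact hσ.1
  · obtain ⟨σ, hσ⟩ := hbox s hs
    exact hσ.2.1
  have hdom : ∀ c ∈ C, c ≠ 0 → ∃ s ∈ ⋃ σ ∈ 𝒮, σ.box C, ℓ s ≤ ℓ c := fun c hcC hc0 => by
    obtain ⟨σ, hσ, N, hN⟩ := h𝒮.exists_expansion c hcC
    obtain ⟨s, hs, hcs⟩ := LatticeSimplex.exists_mem_box_sub_mem hC (h𝒮.denom_pos σ hσ)
      (h𝒮.ray_mem σ hσ) hcC hc0 hN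
    exact ⟨s, mem_biUnion hσ hs, by simpa using hℓ _ hcs⟩
  have hfin : (⋃ σ ∈ 𝒮, σ.box C).Finite :=
    𝒮.finite_toSet.biUnion fun σ hσ => LatticeSimplex.finite_box hC (h𝒮.denom_pos σ hσ)
  obtain ⟨s₀, hs₀, -⟩ := hdom c hcC hc0
  obtain ⟨v, hv, hvmin⟩ := exists_min_image _ ℓ hfin ⟨s₀, hs₀⟩
  have hvC : ∀ c ∈ C, c ≠ 0 → ℓ v ≤ ℓ c := fun c hcC hc0 => by
    obtain ⟨s, hs, hsc⟩ := hdom c hcC hc0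
    exact (hvmin s hs).trans hsc
  obtain ⟨σ, hσ, hvσ⟩ := mem_iUnion₂.mp hv
  obtain ⟨s, hsT, hmem, hne⟩ := hT σ hσ v hvσ
  refine ⟨s, Finset.mem_biUnion.mpr ⟨σ, hσ, hsT⟩, le_trans ?_ (hvC c hcC hc0)⟩
  -- Minimality of `v` gives `ℓ v ≤ ℓ (2 v - s) = 2 ℓ v - ℓ s`.
  have := hvC _ hmem hne
  rw [map_sub, map_nsmul, two_nsmul] at this
  linarith

end MinimizingSets

section Pulling

variable {V : Type*}

/-- The simplicial cone spanned by `r` and `σ`, where `ρ` accounts for the denominators of the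
coefficients on `r`. -/
def LatticeSimplex.join {k : ℕ} (ρ : ℕ) (r : V) (σ : LatticeSimplex V k) :
    LatticeSimplex V (k + 1) where
  denom := ρ * σ.denom
  ray := Fin.cons r σ.ray

theorem IsSimplicialCover.exists_of_pulling [AddCommGroup V] {C : AddSubmonoid V} {r : V}
    (hr : r ∈ C) {ι : Type*} {s : Finset ι} {D : ι → AddSubmonoid V} (hD : ∀ a ∈ s, D a ≤ C)
    {ρ : ι → ℕ} {R : ℕ} (hρ : ∀ a ∈ s, 0 < ρ a) (hρR : ∀ a ∈ s, ρ a ≤ R)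
    (hpull : ∀ c ∈ C, ∃ a ∈ s, ∃ N : ℕ, ρ a • c - N • r ∈ D a) {k B q : ℕ}
    (hcover : ∀ a ∈ s, ∃ 𝒮 : Finset (LatticeSimplex V k),
      IsSimplicialCover (D a) B 𝒮 ∧ 𝒮.card ≤ q) :
    ∃ 𝒮 : Finset (LatticeSimplex V (k + 1)),
      IsSimplicialCover C (R * B) 𝒮 ∧ 𝒮.card ≤ s.card * q := by
  classical
  choose! 𝒮 h𝒮 hcard using hcover
  refine ⟨s.biUnion fun a => (𝒮 a).image (LatticeSimplex.join (ρ a) r), ⟨?_, ?_, ?_, ?_⟩,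
    Finset.card_biUnion_le_card_mul _ _ _ fun a ha => Finset.card_image_le.trans (hcard a ha)⟩
  · simp only [Finset.mem_biUnion, Finset.mem_image]
    rintro _ ⟨a, ha, σ, hσ, rfl⟩
    exact Nat.mul_pos (hρ a ha) ((h𝒮 a ha).denom_pos σ hσ)
  · simp only [Finset.mem_biUnion, Finset.mem_image]
    rintro _ ⟨a, ha, σ, hσ, rfl⟩
    exact Nat.mul_le_mul (hρR a ha) ((h𝒮 a ha).denom_le σ hσ)
  · simp only [Finset.mem_biUnion, Finset.mem_image]
    rintro _ ⟨a, ha, σ, hσ, rfl⟩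
    exact Fin.cases hr fun j => hD a ha ((h𝒮 a ha).ray_mem σ hσ j)
  · intro c hc
    obtain ⟨a, ha, N, hN⟩ := hpull c hc
    obtain ⟨σ, hσ, N', hN'⟩ := (h𝒮 a ha).exists_expansion _ hN
    refine ⟨σ.join (ρ a) r, Finset.mem_biUnion.mpr ⟨a, ha, Finset.mem_image_of_mem _ hσ⟩,
      Fin.cons (σ.denom * N) N', ?_⟩
    rw [Fin.sum_univ_succ]
    simp only [LatticeSimplex.join, Fin.cons_zero, Fin.cons_succ]
    rw [← hN', smul_sub, mul_comm, mul_smul, mul_smul]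
    abel

theorem IsSimplicialCover.exists_of_eq_bot [AddCommMonoid V] {C : AddSubmonoid V} (hC : C = ⊥)
    {B : ℕ} (hB : 0 < B) (k : ℕ) :
    ∃ 𝒮 : Finset (LatticeSimplex V k), IsSimplicialCover C B 𝒮 ∧ 𝒮.card = 1 := by
  subst hC
  refine ⟨{⟨1, 0⟩}, ⟨by simp, by simpa using Nat.one_le_of_lt hB, by simp, fun c hc => ?_⟩,
    Finset.card_singleton _⟩
  exact ⟨_, Finset.mem_singleton_self _, 0, by simpa using hc⟩

end Pulling

section LatticeFaces

variable {I J : Type*} [Fintype J]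

/-- The lattice points of the face of the cone `M *ᵥ c ≥ 0` on which all constraints outside `S`
are tight. -/
def latticeFace (M : Matrix I J ℤ) (S : Set I) : AddSubmonoid (J → ℤ) where
  carrier := {c | 0 ≤ M *ᵥ c ∧ ∀ i ∉ S, (M *ᵥ c) i = 0}
  zero_mem' := by simp
  add_mem' := fun {c c'} hc hc' => by
    refine ⟨?_, fun i hi => ?_⟩
    · rw [mulVec_add]
      exact add_nonneg hc.1 hc'.1
    · simp [mulVec_add, hc.2 i hi, hc'.2 i hi]

/-- The linear span condition underlying `latticeFace M S`, over `ℚ`; its dimension bounds the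
dimension of the face. -/
def faceSpace (M : Matrix I J ℤ) (S : Set I) : Submodule ℚ (J → ℚ) :=
  (Submodule.pi Sᶜ fun _ => ⊥).comap (M.map (Int.castRingHom ℚ)).mulVecLin

variable {M : Matrix I J ℤ} {S : Set I}

theorem mem_faceSpace {x : J → ℚ} :
    x ∈ faceSpace M S ↔ ∀ i ∉ S, (M.map (Int.castRingHom ℚ) *ᵥ x) i = 0 := by
  simp [faceSpace, Submodule.mem_pi]

theorem intCast_mem_faceSpace {c : J → ℤ} :
    Int.castRingHom ℚ ∘ c ∈ faceSpace M S ↔ ∀ i ∉ S, (M *ᵥ c) i = 0 := by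
  simp only [mem_faceSpace, ← RingHom.map_mulVec, eq_intCast, Int.cast_eq_zero]

theorem latticeFace_mono {S T : Set I} (hST : S ⊆ T) : latticeFace M S ≤ latticeFace M T :=
  fun _ hc => ⟨hc.1, fun i hi => hc.2 i fun h => hi (hST h)⟩

theorem mem_latticeFace_univ {c : J → ℤ} : c ∈ latticeFace M univ ↔ 0 ≤ M *ᵥ c :=
  and_iff_left fun i hi => (hi (mem_univ i)).elim

theorem isLatticeCone_latticeFace (hM : Function.Injective M.mulVec) :
    IsLatticeCone (latticeFace M S) where
  saturated {d c} hd hc := by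
    obtain ⟨hpos, hzero⟩ := hc
    rw [mulVec_smul] at hpos hzero
    refine ⟨fun i => nonneg_of_mul_nonneg_right ?_ (Int.natCast_pos.mpr hd), fun i hi => ?_⟩
    · simpa using hpos i
    · simpa [hd.ne'] using hzero i hi
  eq_zero_of_neg_mem {c} hc hc' := hM <| by
    have := hc'.1
    rw [mulVec_neg, Left.nonneg_neg_iff] at this
    rw [mulVec_zero, le_antisymm this hc.1]

theorem latticeFace_eq_bot_of_finrank_eq_zero (h : Module.finrank ℚ (faceSpace M S) = 0) :
    latticeFace M S = ⊥ := by
  refine (AddSubmonoid.eq_bot_iff_forall _).mpr fun c hc => ?_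
  have := intCast_mem_faceSpace.mpr hc.2
  rw [Submodule.finrank_eq_zero.mp h, Submodule.mem_bot] at this
  funext j
  simpa using congrFun this j

theorem finrank_faceSpace_sdiff_lt {r : J → ℤ} (hr : r ∈ latticeFace M S) {a : I}
    (ha : (M *ᵥ r) a ≠ 0) :
    Module.finrank ℚ (faceSpace M (S \ {a})) < Module.finrank ℚ (faceSpace M S) := by
  refine Submodule.finrank_lt_finrank_of_lt (SetLike.lt_iff_le_and_exists.mpr ⟨?_, ?_⟩)
  · exact fun x hx => mem_faceSpace.mpr fun i hi => mem_faceSpace.mp hx i fun h => hi h.1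
  · exact ⟨_, intCast_mem_faceSpace.mpr hr.2, fun h => ha (intCast_mem_faceSpace.mp h a (by simp))⟩

theorem exists_smul_sub_smul_mem_latticeFace_sdiff [Finite I] {c r : J → ℤ}
    (hc : c ∈ latticeFace M S) (hr : ∀ i ∉ S, (M *ᵥ r) i = 0) (hpos : ∃ i, 0 < (M *ᵥ r) i) :
    ∃ a, 0 < (M *ᵥ r) a ∧ (M *ᵥ r) a • c - (M *ᵥ c) a • r ∈ latticeFace M (S \ {a}) := by
  obtain ⟨a, ha, hratio⟩ := exists_ratio_test (K := ℚ) (y := fun i => (M *ᵥ c) i)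
    (w := fun i => (M *ᵥ r) i) (fun i => Int.cast_nonneg (hc.1 i)) (by exact_mod_cast hpos)
  refine ⟨a, by exact_mod_cast ha, ?_, ?_⟩
  · intro i
    rw [mulVec_sub, mulVec_smul, mulVec_smul]
    have := hratio i
    simp only [Pi.zero_apply, Pi.sub_apply, Pi.smul_apply, smul_eq_mul]
    exact_mod_cast this
  · intro i hi
    rw [mulVec_sub, mulVec_smul, mulVec_smul]
    by_cases hS : i ∈ S
    · obtain rfl : i = a := by simpa [hS] using hi
      simp [mul_comm]
    · simp [hr i hS, hc.2 i hS]

variable [Fintype I] [Nonempty I]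

theorem exists_isSimplicialCover_latticeFace (hM : Function.Injective M.mulVec) {R : ℕ} (hR : 0 < R)
    (hray : ∀ S, latticeFace M S ≠ ⊥ → ∃ r ∈ latticeFace M S, r ≠ 0 ∧ ∀ i, (M *ᵥ r) i ≤ R)
    {k : ℕ} (hk : Module.finrank ℚ (faceSpace M S) ≤ k) :
    ∃ 𝒮 : Finset (LatticeSimplex (J → ℤ) k), IsSimplicialCover (latticeFace M S) (R ^ k) 𝒮 ∧
      𝒮.card ≤ Fintype.card I ^ k := by
  induction k generalizing S with
  | zero =>
    obtain ⟨𝒮, h𝒮, hcard⟩ := IsSimplicialCover.exists_of_eq_bot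
      (latticeFace_eq_bot_of_finrank_eq_zero (Nat.le_zero.mp hk)) one_pos 0
    exact ⟨𝒮, by simpa using h𝒮, by simp [hcard]⟩
  | succ k ih =>
    by_cases hbot : latticeFace M S = ⊥
    · obtain ⟨𝒮, h𝒮, hcard⟩ :=
        IsSimplicialCover.exists_of_eq_bot hbot (pow_pos hR (k + 1)) (k + 1)
      exact ⟨𝒮, h𝒮, hcard.le.trans (Nat.one_le_pow _ _ Fintype.card_pos)⟩
    obtain ⟨r, hr, hr0, hrR⟩ := hray S hbot
    have hMr : ∃ i, 0 < (M *ᵥ r) i := by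
      obtain ⟨i, hi⟩ := Function.ne_iff.mp fun h : M *ᵥ r = 0 => hr0 (hM (by simpa using h))
      exact ⟨i, (hr.1 i).lt_of_ne' hi⟩
    have hpull : ∀ c ∈ latticeFace M S, ∃ a ∈ Finset.univ.filter fun a => 0 < (M *ᵥ r) a,
        ∃ N : ℕ, ((M *ᵥ r) a).toNat • c - N • r ∈ latticeFace M (S \ {a}) := fun c hc => by
      obtain ⟨a, ha, hmem⟩ := exists_smul_sub_smul_mem_latticeFace_sdiff hc hr.2 hMr
      refine ⟨a, by simpa using ha, ((M *ᵥ c) a).toNat, ?_⟩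
      rwa [← natCast_zsmul, ← natCast_zsmul, Int.toNat_of_nonneg ha.le,
        Int.toNat_of_nonneg (hc.1 a)]
    obtain ⟨𝒮, h𝒮, hcard⟩ := IsSimplicialCover.exists_of_pulling (R := R) hr
      (fun a _ => latticeFace_mono sdiff_subset) (by simp) (fun a _ => Int.toNat_le.mpr (hrR a))
      hpull fun a ha => ih <| Nat.le_of_lt_succ <|
        (finrank_faceSpace_sdiff_lt hr (Finset.mem_filter.mp ha).2.ne').trans_le hk
    rw [← pow_succ'] at h𝒮
    refine ⟨𝒮, h𝒮, hcard.trans ?_⟩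
    rw [pow_succ']
    exact Nat.mul_le_mul_right _ (Finset.card_le_univ _)

end LatticeFaces

section Cramer

/-- A bound on the entries of the adjugate of an `n × n` integer matrix whose entries are bounded by
`β ≥ 1` in absolute value. -/
def adjugateBound (n β : ℕ) : ℕ := n.factorial * β ^ n

variable {J : Type*} [Fintype J]

theorem abs_mulVec_le {I : Type*} {M : Matrix I J ℤ} {x : J → ℤ} {β γ : ℕ}
    (hM : ∀ i j, |M i j| ≤ β) (hx : ∀ j, |x j| ≤ γ) (i : I) :
    |(M *ᵥ x) i| ≤ (Fintype.card J * (β * γ) : ℕ) :=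
  calc |(M *ᵥ x) i| ≤ ∑ j, |M i j * x j| := Finset.abs_sum_le_sum_abs _ _
    _ ≤ ∑ _j : J, (β * γ : ℤ) := Finset.sum_le_sum fun j _ => by
        rw [abs_mul]
        exact mul_le_mul (hM i j) (hx j) (abs_nonneg _) (by positivity)
    _ = _ := by simp

variable [DecidableEq J] {E : Matrix J J ℤ}

theorem abs_adjugate_le {β : ℕ} (hβ : 1 ≤ β) (hE : ∀ i j, |E i j| ≤ β) (p q : J) :
    |E.adjugate p q| ≤ adjugateBound (Fintype.card J) β := by
  rw [adjugate_apply]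
  refine (det_le (abv := AbsoluteValue.abs) (x := (β : ℤ)) fun i j => ?_).trans
    (by simp [adjugateBound])
  rw [AbsoluteValue.abs_apply]
  rcases eq_or_ne i q with rfl | hi
  · rw [updateRow_self, Pi.single_apply]
    split_ifs <;> simp [hβ]
  · rw [updateRow_ne hi]
    exact hE i j

theorem abs_det_smul_eq_smul_sign_mul_adjugate {v : J → ℤ} {j : J} {s : ℤ}
    (hv : E *ᵥ v = Pi.single j s) : |E.det| • v = s • fun q => E.det.sign * E.adjugate q j := by
  have hdet : E.det • v = E.adjugate *ᵥ Pi.single j s := by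
    rw [← hv, mulVec_mulVec, adjugate_mul, smul_mulVec, one_mulVec]
  funext q
  have := congrFun hdet q
  simp only [mulVec_single, Pi.smul_apply, smul_eq_mul, op_smul_eq_smul, col_apply] at this ⊢
  rw [← Int.sign_mul_self_eq_abs, mul_assoc, this]
  ring

end Cramer

section BoundedRays

variable {I J : Type*} [Finite I] [Fintype J] {M : Matrix I J ℤ} {S : Set I}

theorem eq_zero_of_latticeFace_sdiff_eq_bot (hM : Function.Injective M.mulVec)
    (hmin : ∀ a ∈ S, latticeFace M (S \ {a}) = ⊥) {v : J → ℤ} (hv : v ∈ latticeFace M S) {t : I}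
    (ht : (M *ᵥ v) t ≠ 0) {x : J → ℤ} (hx : ∀ i ∉ S, (M *ᵥ x) i = 0) (hxt : (M *ᵥ x) t = 0) :
    x = 0 := by
  have hnonpos : ∀ y : J → ℤ, (∀ i ∉ S, (M *ᵥ y) i = 0) → (M *ᵥ y) t = 0 → M *ᵥ y ≤ 0 := by
    intro y hy hyt
    by_contra hpos
    obtain ⟨a, ha, hmem⟩ := exists_smul_sub_smul_mem_latticeFace_sdiff hv hy
      (by simpa [Pi.le_def] using hpos)
    have haS : a ∈ S := not_imp_comm.mp (hy a) ha.ne'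
    rw [hmin a haS, AddSubmonoid.mem_bot, sub_eq_zero] at hmem
    have := congrFun (congrArg M.mulVec hmem) t
    simp only [mulVec_smul, Pi.smul_apply, smul_eq_mul, hyt, mul_zero] at this
    exact mul_ne_zero ha.ne' ht this
  refine hM ((le_antisymm (hnonpos x hx hxt) ?_).trans (mulVec_zero M).symm)
  have := hnonpos (-x) (by simpa [mulVec_neg] using hx) (by simpa [mulVec_neg] using hxt)
  simpa [mulVec_neg] using this

theorem exists_submatrix_mulVec_eq_single [DecidableEq J] (hM : Function.Injective M.mulVec)
    (hS : latticeFace M S ≠ ⊥) :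
    ∃ v ∈ latticeFace M S, v ≠ 0 ∧ ∃ f : J → I, (M.submatrix f id).det ≠ 0 ∧
      ∃ j, ∃ s > 0, M.submatrix f id *ᵥ v = Pi.single j s := by
  obtain ⟨T, hTS, hTbot, hTmin⟩ := exists_minimal_le_of_wellFoundedLT
    (fun T => latticeFace M T ≠ ⊥) S hS
  have hTsdiff : ∀ a ∈ T, latticeFace M (T \ {a}) = ⊥ := fun a ha =>
    not_not.mp fun h => (hTmin h sdiff_subset ha).2 rfl
  obtain ⟨v, hv, hv0⟩ := (AddSubmonoid.bot_or_exists_ne_zero _).resolve_left hTbot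
  obtain ⟨t, ht⟩ := Function.ne_iff.mp fun h : M *ᵥ v = 0 => hv0 (hM (by simpa using h))
  obtain ⟨f, hft, hf⟩ := exists_submatrix_det_ne_zero_of_injective (t := insert t Tᶜ)
    fun x hx => eq_zero_of_latticeFace_sdiff_eq_bot hM hTsdiff hv ht
      (fun i hi => hx i (mem_insert_of_mem t hi)) (hx t (mem_insert t _))
  have hzero : ∀ j, f j ≠ t → (M *ᵥ v) (f j) = 0 := fun j hj =>
    hv.2 _ ((mem_insert_iff.mp (hft j)).resolve_left hj)
  obtain ⟨j, hj⟩ : ∃ j, f j = t := by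
    by_contra! h
    exact hv0 (eq_zero_of_mulVec_eq_zero hf (funext fun j => hzero j (h j)))
  refine ⟨v, latticeFace_mono hTS hv, hv0, f, hf, j, (M *ᵥ v) t, (hv.1 t).lt_of_ne' ht, ?_⟩
  funext i
  change (M *ᵥ v) (f i) = _
  rcases eq_or_ne i j with rfl | hij
  · rw [hj, Pi.single_eq_same]
  · rw [Pi.single_eq_of_ne hij]
    exact hzero i fun h => hij (injective_of_submatrix_det_ne_zero hf (h.trans hj.symm))

theorem exists_bounded_mem_latticeFace (hM : Function.Injective M.mulVec) {β : ℕ} (hβ : 1 ≤ β)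
    (hMβ : ∀ i j, |M i j| ≤ β) (hS : latticeFace M S ≠ ⊥) :
    ∃ r ∈ latticeFace M S, r ≠ 0 ∧ ∀ i, (M *ᵥ r) i ≤
      (Fintype.card J * (β * adjugateBound (Fintype.card J) β) : ℕ) := by
  classical
  obtain ⟨v, hv, hv0, f, hf, j, s, hs, hfv⟩ := exists_submatrix_mulVec_eq_single hM hS
  have hr := abs_det_smul_eq_smul_sign_mul_adjugate hfv
  set E := M.submatrix f id
  refine ⟨fun q => E.det.sign * E.adjugate q j, ?_, ?_, fun i => ?_⟩
  · refine (isLatticeCone_latticeFace hM).saturated (Int.pos_iff_toNat_pos.mp hs) ?_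
    rw [← natCast_zsmul, Int.toNat_of_nonneg hs.le, ← hr, Int.abs_eq_natAbs, natCast_zsmul]
    exact nsmul_mem hv _
  · intro h0
    rw [h0, smul_zero, smul_eq_zero, abs_eq_zero] at hr
    exact hr.elim hf hv0
  · refine (le_abs_self _).trans (abs_mulVec_le hMβ (fun q => ?_) i)
    rw [abs_mul, Int.abs_sign_of_ne_zero hf, one_mul]
    exact abs_adjugate_le hβ (fun _ _ => hMβ _ _) q j

end BoundedRays

theorem exists_isMinimizingSet_latticeFace {I J : Type*} [Fintype I] [Nonempty I] [Fintype J]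
    [Nonempty J] {M : Matrix I J ℤ} (hM : Function.Injective M.mulVec) {β : ℕ} (hβ : 1 ≤ β)
    (hMβ : ∀ i j, |M i j| ≤ β) (S : Set I) :
    ∃ T, IsMinimizingSet (latticeFace M S) T ∧ T.card ≤ Fintype.card I ^ Fintype.card J *
      (((Fintype.card J * (β * adjugateBound (Fintype.card J) β)) ^ Fintype.card J).size + 1) ^
        (Fintype.card J - 1) := by
  have hray := fun S' => exists_bounded_mem_latticeFace hM hβ hMβ (S := S')
  have hR : 0 < Fintype.card J * (β * adjugateBound (Fintype.card J) β) := by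
    have := Fintype.card_pos (α := J)
    unfold adjugateBound
    positivity
  generalize Fintype.card J * (β * adjugateBound (Fintype.card J) β) = R at hray hR ⊢
  have hdim := Submodule.finrank_le (faceSpace M S)
  obtain ⟨n, hn⟩ := Nat.exists_eq_succ_of_ne_zero (Fintype.card_ne_zero (α := J))
  rw [Module.finrank_fintype_fun_eq_card, hn] at hdim
  obtain ⟨𝒮, h𝒮, hcard⟩ := exists_isSimplicialCover_latticeFace hM hR hray hdim
  obtain ⟨T, hT, hTcard⟩ := h𝒮.exists_isMinimizingSet (isLatticeCone_latticeFace hM)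
  rw [hn]
  exact ⟨T, hT, hTcard.trans (Nat.mul_le_mul_right _ hcard)⟩

section RationalSize

theorem natAbs_num_add_one_mul_den_le_two_pow_ratSize (α : ℚ) :
    (α.num.natAbs + 1) * α.den ≤ 2 ^ ratSize α := by
  rw [ratSize, add_assoc, pow_add, pow_add]
  exact (Nat.mul_le_mul (Nat.le_pow_clog one_lt_two _)
    ((Nat.le_succ _).trans (Nat.le_pow_clog one_lt_two _))).trans
      (Nat.le_mul_of_pos_left _ (by positivity))

theorem exists_common_denom {m : ℕ} (a : Fin m → ℚ) :
    ∃ (d : ℕ) (z : Fin m → ℤ), 0 < d ∧ d ≤ 2 ^ vecSize a ∧ (∀ i, |z i| ≤ 2 ^ vecSize a) ∧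
      ∀ i, (z i : ℚ) = a i * d := by
  have hden (i) : (a i).den ≤ 2 ^ ratSize (a i) :=
    (Nat.le_mul_of_pos_left _ (Nat.succ_pos _)).trans
      (natAbs_num_add_one_mul_den_le_two_pow_ratSize (a i))
  have hnum (i) : (a i).num.natAbs ≤ 2 ^ ratSize (a i) :=
    (Nat.le_succ _).trans <| (Nat.le_mul_of_pos_right _ (a i).den_pos).trans
      (natAbs_num_add_one_mul_den_le_two_pow_ratSize (a i))
  have hprod : ∏ i, 2 ^ ratSize (a i) ≤ 2 ^ vecSize a := by
    rw [Finset.prod_pow_eq_pow_sum]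
    exact Nat.pow_le_pow_right two_pos (Nat.le_add_left _ _)
  refine ⟨∏ i, (a i).den, fun i => (a i).num * ∏ k ∈ Finset.univ.erase i, (a k).den,
    Finset.prod_pos fun i _ => (a i).den_pos, (Finset.prod_le_prod' fun i _ => hden i).trans hprod,
    fun i => ?_, fun i => ?_⟩
  · have : (a i).num.natAbs * ∏ k ∈ Finset.univ.erase i, (a k).den ≤ 2 ^ vecSize a := by
      refine le_trans ?_ hprod
      rw [← Finset.mul_prod_erase _ _ (Finset.mem_univ i)]
      exact Nat.mul_le_mul (hnum i) (Finset.prod_le_prod' fun k _ => hden k)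
    rw [abs_mul, Int.abs_eq_natAbs, Nat.abs_cast]
    exact_mod_cast this
  · rw [← Finset.mul_prod_erase _ _ (Finset.mem_univ i)]
    push_cast
    rw [← mul_assoc, Rat.mul_den_eq_num]

theorem exists_int_map_eq_smul_inv {J : Type*} [Fintype J] [DecidableEq J] {B : Matrix J J ℚ}
    (hB : B.det ≠ 0) {E : Matrix J J ℤ} {d : J → ℕ} (hd : ∀ j, 0 < d j)
    (hE : E.map ((↑) : ℤ → ℚ) = B * diagonal fun j => (d j : ℚ)) {β γ : ℕ} (hβ : 1 ≤ β)
    (hEβ : ∀ i j, |E i j| ≤ β) (hdγ : ∀ j, d j ≤ γ) :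
    ∃ (N : Matrix J J ℤ) (κ : ℚ), 0 < κ ∧ N.map ((↑) : ℤ → ℚ) = κ • B⁻¹ ∧
      ∀ i j, |N i j| ≤ (γ * adjugateBound (Fintype.card J) β : ℕ) := by
  have hdet : (E.det : ℚ) = B.det * ∏ j, (d j : ℚ) := by
    rw [Int.cast_det, hE, det_mul, det_diagonal]
  have hE0 : E.det ≠ 0 := by
    rw [← Int.cast_ne_zero (α := ℚ), hdet]
    exact mul_ne_zero hB (Finset.prod_ne_zero_iff.mpr fun j _ => by exact_mod_cast (hd j).ne')
  have hEadj : E.map ((↑) : ℤ → ℚ) * E.adjugate.map ((↑) : ℤ → ℚ) = (E.det : ℚ) • 1 := by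
    rw [← map_mul_intCast, mul_adjugate]
    simp [smul_one_eq_diagonal]
  have hadj : (Matrix.diagonal fun j => (d j : ℚ)) * E.adjugate.map ((↑) : ℤ → ℚ) =
      (E.det : ℚ) • B⁻¹ := by
    rw [← nonsing_inv_mul_cancel_left B (Matrix.diagonal _ * _) hB.isUnit, ← Matrix.mul_assoc B,
      ← hE, hEadj, Matrix.mul_smul, Matrix.mul_one]
  refine ⟨E.det.sign • (Matrix.diagonal (fun j => (d j : ℤ)) * E.adjugate), (|E.det| : ℤ),
    by positivity, ?_, fun i j => ?_⟩
  · ext i j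
    have := congrFun (congrFun hadj i) j
    simp only [diagonal_mul, map_apply, Matrix.smul_apply, smul_eq_mul] at this ⊢
    rw [← Int.sign_mul_self_eq_abs]
    simp only [Int.cast_mul, Int.cast_natCast, mul_assoc, this]
  · rw [Matrix.smul_apply, diagonal_mul, smul_eq_mul, abs_mul, Int.abs_sign_of_ne_zero hE0, one_mul,
      abs_mul, Nat.abs_cast, Nat.cast_mul]
    exact mul_le_mul (by exact_mod_cast hdγ i) (abs_adjugate_le hβ hEβ i j) (abs_nonneg _)
      (by positivity)

theorem exists_int_map_eq_smul_inv_submatrix {m n φ : ℕ} {A : Matrix (Fin m) (Fin n) ℚ}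
    (hφ : ∀ j, vecSize (fun i => A i j) ≤ φ) {f : Fin n → Fin m}
    (hf : (A.submatrix f id).det ≠ 0) :
    ∃ (N : Matrix (Fin n) (Fin n) ℤ) (κ : ℚ), 0 < κ ∧
      N.map ((↑) : ℤ → ℚ) = κ • (A.submatrix f id)⁻¹ ∧
      ∀ i j, |N i j| ≤ (2 ^ φ * adjugateBound n (2 ^ φ) : ℕ) := by
  have hpow (j) : 2 ^ vecSize (fun i => A i j) ≤ 2 ^ φ := Nat.pow_le_pow_right two_pos (hφ j)
  choose d Z hd hdle hZle hZ using fun j => exists_common_denom fun i => A i j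
  have hE : ((Matrix.of Z)ᵀ.submatrix f id).map ((↑) : ℤ → ℚ) =
      A.submatrix f id * diagonal fun j => (d j : ℚ) := by
    ext i j
    simp [hZ]
  have := exists_int_map_eq_smul_inv hf hd hE Nat.one_le_two_pow
    (fun i j => (hZle j (f i)).trans (by exact_mod_cast hpow j)) (fun j => (hdle j).trans (hpow j))
  rwa [Fintype.card_fin] at this

theorem adjugateBound_le_two_pow {n φ a β : ℕ} (hn : n ≤ φ) (hβ : β ≤ 2 ^ a) :
    adjugateBound n β ≤ 2 ^ ((φ + a) * n) := by
  rw [pow_mul, pow_add, mul_pow]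
  exact Nat.mul_le_mul ((Nat.factorial_le_pow n).trans
    (Nat.pow_le_pow_left (hn.trans Nat.lt_two_pow_self.le) n)) (Nat.pow_le_pow_left hβ n)

theorem size_rayBound_add_one_le {n φ : ℕ} (hn : 1 ≤ n) (hnφ : n ≤ φ) {β : ℕ}
    (hβ : β = 2 ^ φ * adjugateBound n (2 ^ φ)) :
    ((n * (β * adjugateBound n β)) ^ n).size + 1 ≤ 24 * n ^ 5 * φ := by
  have hβle : β ≤ 2 ^ (φ + (φ + φ) * n) := by
    rw [hβ, pow_add]
    exact Nat.mul_le_mul_left _ (adjugateBound_le_two_pow hnφ le_rfl)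
  have hR : n * (β * adjugateBound n β) ≤
      2 ^ (φ + (φ + (φ + φ) * n + (φ + (φ + (φ + φ) * n)) * n)) := by
    rw [pow_add, pow_add _ (φ + (φ + φ) * n)]
    exact Nat.mul_le_mul (hnφ.trans Nat.lt_two_pow_self.le)
      (Nat.mul_le_mul hβle (adjugateBound_le_two_pow hnφ hβle))
  have hsize := Nat.size_le_size (Nat.pow_le_pow_left hR n)
  rw [← pow_mul, Nat.size_pow] at hsize
  have hle : ∀ k ≤ 5, φ * n ^ k ≤ φ * n ^ 5 := fun k hk =>
    Nat.mul_le_mul_left _ (Nat.pow_le_pow_right hn hk)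
  linarith [hle 0 (by norm_num), hle 1 (by norm_num), hle 2 (by norm_num), hle 3 (by norm_num)]

end RationalSize

section NormalCones

variable {m n : ℕ} {A : Matrix (Fin m) (Fin n) ℚ} {f g : Fin n → Fin m}

/-- The integral directions which are nonnegative combinations of the rows `f` of `A`. For these,
the basic solution of `f` is a maximizer over `P_b` whenever it is feasible. -/
def normalCone (A : Matrix (Fin m) (Fin n) ℚ) (f : Fin n → Fin m) : AddSubmonoid (Fin n → ℤ) where
  carrier := {c | 0 ≤ (fun j => (c j : ℚ)) ᵥ* (A.submatrix f id)⁻¹}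
  zero_mem' := by simp [← Pi.zero_def]
  add_mem' {c c'} hc hc' := by
    simpa [← Pi.add_def, add_vecMul] using add_nonneg hc hc'

/-- The integral directions `c` such that `c` is a nonnegative combination of the rows `f` of `A`
and `-c` one of the rows `g`. -/
def widthCone (A : Matrix (Fin m) (Fin n) ℚ) (f g : Fin n → Fin m) : AddSubmonoid (Fin n → ℤ) :=
  normalCone A f ⊓ (normalCone A g).comap negAddMonoidHom

/-- The choices of `n` rows of `A` that form a basis. -/
abbrev RowBasis (A : Matrix (Fin m) (Fin n) ℚ) : Type :=
  {f : Fin n → Fin m // (A.submatrix f id).det ≠ 0}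

theorem mem_normalCone_iff_real {c : Fin n → ℤ} :
    c ∈ normalCone A f ↔
      0 ≤ (fun j => (c j : ℝ)) ᵥ* ((A.map (Rat.castHom ℝ)).submatrix f id)⁻¹ := by
  rw [submatrix_map, inv_map_eq_map_inv]
  have hcast : (fun j => (c j : ℝ)) = Rat.castHom ℝ ∘ fun j => (c j : ℚ) := by
    funext j
    simp
  refine forall_congr' fun j => ?_
  rw [hcast, ← RingHom.map_vecMul, Pi.zero_apply, Pi.zero_apply, eq_ratCast, Rat.cast_nonneg]

theorem sum_mul_le_of_mem_normalCone (hf : (A.submatrix f id).det ≠ 0) {c : Fin n → ℤ}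
    (hc : c ∈ normalCone A f) {b : Fin m → ℝ} {x : Fin n → ℝ} (hx : x ∈ Pb A b) :
    ∑ q, (c q : ℝ) * x q ≤ ∑ q, (c q : ℝ) * applyRat (basicSolution A f) b q := by
  have hdet : ((A.map (Rat.castHom ℝ)).submatrix f id).det ≠ 0 := by
    rwa [submatrix_map, ← RingHom.mapMatrix_apply, ← RingHom.map_det, map_ne_zero]
  have := dotProduct_le_of_nonneg_vecMul_inv hdet (mem_normalCone_iff_real.mp hc) hx
  rwa [basicSolution_map] at this

theorem le_sum_mul_and_sum_mul_le_of_mem_widthCone (hf : (A.submatrix f id).det ≠ 0)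
    (hg : (A.submatrix g id).det ≠ 0) {c : Fin n → ℤ} (hc : c ∈ widthCone A f g) {b : Fin m → ℝ}
    {x : Fin n → ℝ} (hx : x ∈ Pb A b) :
    ∑ q, (c q : ℝ) * applyRat (basicSolution A g) b q ≤ ∑ q, (c q : ℝ) * x q ∧
      ∑ q, (c q : ℝ) * x q ≤ ∑ q, (c q : ℝ) * applyRat (basicSolution A f) b q := by
  refine ⟨?_, sum_mul_le_of_mem_normalCone hf hc.1 hx⟩
  simpa using sum_mul_le_of_mem_normalCone hg hc.2 hx

theorem exists_rowBasis_sum_mul_le (hrank : A.rank = n) {b : Fin m → ℝ} (hb : (Pb A b).Nonempty)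
    {c : Fin n → ℤ} {δ : ℝ} (hδ : ∀ x ∈ Pb A b, ∑ q, (c q : ℝ) * x q ≤ δ) :
    ∃ f : RowBasis A, c ∈ normalCone A f ∧
      ∑ q, (c q : ℝ) * applyRat (basicSolution A f) b q ≤ δ := by
  obtain ⟨x₀, hx₀⟩ := hb
  have hspan := span_range_row_map_eq_top
    (span_range_row_eq_top_iff_rank.mpr (hrank.trans (Fintype.card_fin n).symm)) (Rat.castHom ℝ)
  obtain ⟨f, hf, hc, hle⟩ := exists_optimal_basis (c := fun q => (c q : ℝ)) hspan hx₀ hδ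
  rw [submatrix_map, ← RingHom.mapMatrix_apply, ← RingHom.map_det, map_ne_zero] at hf
  rw [basicSolution_map] at hle
  exact ⟨⟨f, hf⟩, mem_normalCone_iff_real.mpr hc, hle⟩

theorem det_ne_zero_of_map_eq_smul_inv {N : Matrix (Fin n) (Fin n) ℤ} {κ : ℚ} (hκ : 0 < κ)
    (hN : N.map ((↑) : ℤ → ℚ) = κ • (A.submatrix f id)⁻¹) (hf : (A.submatrix f id).det ≠ 0) :
    N.det ≠ 0 := by
  rw [← Int.cast_ne_zero (α := ℚ), Int.cast_det, hN, det_smul, det_nonsing_inv,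
    Ring.inverse_eq_inv']
  exact mul_ne_zero (pow_ne_zero _ hκ.ne') (inv_ne_zero hf)

theorem mem_normalCone_iff_nonneg_vecMul {N : Matrix (Fin n) (Fin n) ℤ} {κ : ℚ} (hκ : 0 < κ)
    (hN : N.map ((↑) : ℤ → ℚ) = κ • (A.submatrix f id)⁻¹) {c : Fin n → ℤ} :
    c ∈ normalCone A f ↔ 0 ≤ c ᵥ* N := by
  have hcast : κ • ((fun j => (c j : ℚ)) ᵥ* (A.submatrix f id)⁻¹) =
      fun j => ((c ᵥ* N) j : ℚ) := by
    rw [← vecMul_smul, ← hN]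
    exact funext fun j => (RingHom.map_vecMul (Int.castRingHom ℚ) N c j).symm
  have hmem : c ∈ normalCone A f ↔ 0 ≤ κ • ((fun j => (c j : ℚ)) ᵥ* (A.submatrix f id)⁻¹) :=
    forall_congr' fun j => (mul_nonneg_iff_of_pos_left hκ).symm
  rw [hmem, hcast]
  exact forall_congr' fun j => Int.cast_nonneg_iff

theorem exists_latticeFace_univ_eq_widthCone {φ : ℕ} (hφ : ∀ j, vecSize (fun i => A i j) ≤ φ)
    (hf : (A.submatrix f id).det ≠ 0) (hg : (A.submatrix g id).det ≠ 0) :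
    ∃ M : Matrix (Fin n ⊕ Fin n) (Fin n) ℤ, Function.Injective M.mulVec ∧
      (∀ i j, |M i j| ≤ (2 ^ φ * adjugateBound n (2 ^ φ) : ℕ)) ∧
      latticeFace M univ = widthCone A f g := by
  obtain ⟨N, κ, hκ, hN, hNle⟩ := exists_int_map_eq_smul_inv_submatrix hφ hf
  obtain ⟨N', κ', hκ', hN', hNle'⟩ := exists_int_map_eq_smul_inv_submatrix hφ hg
  refine ⟨fromRows Nᵀ (-N'ᵀ), ?_, ?_, ?_⟩
  · refine (injective_iff_map_eq_zero (fromRows Nᵀ (-N'ᵀ)).mulVecLin).mpr fun c hc => ?_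
    refine eq_zero_of_vecMul_eq_zero (det_ne_zero_of_map_eq_smul_inv hκ hN hf) ?_
    rw [mulVecLin_apply, fromRows_mulVec, mulVec_transpose] at hc
    exact funext fun j => congrFun hc (Sum.inl j)
  · rintro (i | i) j
    · exact hNle j i
    · simpa using hNle' j i
  · ext c
    have hneg : -c ᵥ* N' = -N'ᵀ *ᵥ c := by rw [neg_vecMul, neg_mulVec, mulVec_transpose]
    change _ ↔ c ∈ normalCone A f ∧ -c ∈ normalCone A g
    rw [mem_normalCone_iff_nonneg_vecMul hκ hN, mem_normalCone_iff_nonneg_vecMul hκ' hN', hneg,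
      ← mulVec_transpose, mem_latticeFace_univ, fromRows_mulVec]
    exact Sum.forall

theorem exists_isMinimizingSet_widthCone {φ : ℕ} (hn : 1 ≤ n) (hnφ : n ≤ φ)
    (hφ : ∀ j, vecSize (fun i => A i j) ≤ φ) (hf : (A.submatrix f id).det ≠ 0)
    (hg : (A.submatrix g id).det ≠ 0) :
    ∃ T, IsMinimizingSet (widthCone A f g) T ∧
      T.card ≤ (2 * n) ^ n * (24 * n ^ 5 * φ) ^ (n - 1) := by
  have : NeZero n := NeZero.of_pos hn
  obtain ⟨M, hM, hMle, hMeq⟩ := exists_latticeFace_univ_eq_widthCone hφ hf hg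
  have hβ : 1 ≤ 2 ^ φ * adjugateBound n (2 ^ φ) :=
    Nat.succ_le_of_lt (by unfold adjugateBound; positivity)
  obtain ⟨T, hT, hTcard⟩ := exists_isMinimizingSet_latticeFace hM hβ hMle univ
  refine ⟨T, hMeq ▸ hT, hTcard.trans ?_⟩
  rw [Fintype.card_sum, Fintype.card_fin, ← two_mul]
  exact Nat.mul_le_mul_left _ (Nat.pow_le_pow_left (size_rayBound_add_one_le hn hnφ rfl) _)

end NormalCones

section LatticeWidth

variable {n : ℕ} {K : Set (Fin n → ℝ)}

theorem widthAlong_le_coe_sub {c : Fin n → ℝ} {lo hi : ℝ}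
    (h : ∀ x ∈ K, lo ≤ ∑ i, c i * x i ∧ ∑ i, c i * x i ≤ hi) :
    widthAlong K c ≤ ((hi - lo : ℝ) : EReal) := by
  rw [EReal.coe_sub]
  refine EReal.sub_le_sub (sSup_le ?_) (le_sInf ?_) <;> rintro _ ⟨x, hx, rfl⟩
  exacts [EReal.coe_le_coe_iff.mpr (h x hx).2, EReal.coe_le_coe_iff.mpr (h x hx).1]

theorem exists_bounds_of_widthAlong_ne_top (hK : K.Nonempty) {c : Fin n → ℝ}
    (hc : widthAlong K c ≠ ⊤) :
    ∃ lo hi : ℝ, (∀ x ∈ K, lo ≤ ∑ i, c i * x i ∧ ∑ i, c i * x i ≤ hi) ∧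
      widthAlong K c = ((hi - lo : ℝ) : EReal) := by
  obtain ⟨x₀, hx₀⟩ := hK
  unfold widthAlong at hc ⊢
  set S := (fun x => ((∑ i, c i * x i : ℝ) : EReal)) '' K
  have hx₀S : ((∑ i, c i * x₀ i : ℝ) : EReal) ∈ S := mem_image_of_mem _ hx₀
  have hsup_bot : sSup S ≠ ⊥ := ((EReal.bot_lt_coe _).trans_le (le_sSup hx₀S)).ne'
  have hinf_top : sInf S ≠ ⊤ := ((sInf_le hx₀S).trans_lt (EReal.coe_lt_top _)).ne
  have hsup_top : sSup S ≠ ⊤ := fun h => hc (by rw [h, EReal.top_sub hinf_top])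
  have hinf_bot : sInf S ≠ ⊥ := fun h => hc (by
    rw [h, sub_eq_add_neg, EReal.neg_bot, EReal.add_top_of_ne_bot hsup_bot])
  lift sSup S to ℝ using ⟨hsup_top, hsup_bot⟩ with hi hhi
  lift sInf S to ℝ using ⟨hinf_top, hinf_bot⟩ with lo hlo
  refine ⟨lo, hi, fun x hx => ⟨?_, ?_⟩, (EReal.coe_sub _ _).symm⟩
  · exact EReal.coe_le_coe_iff.mp (hlo.trans_le (sInf_le (mem_image_of_mem _ hx)))
  · exact EReal.coe_le_coe_iff.mp ((le_sSup (mem_image_of_mem _ hx)).trans_eq hhi.symm)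

theorem latticeWidth_le_widthAlong {c : Fin n → ℤ} (hc : c ≠ 0) :
    latticeWidth K ≤ widthAlong K fun i => (c i : ℝ) :=
  sInf_le ⟨c, hc, rfl⟩

theorem exists_widthAlong_ne_top (hK : latticeWidth K ≠ ⊤) :
    ∃ c : Fin n → ℤ, c ≠ 0 ∧ widthAlong K (fun i => (c i : ℝ)) ≠ ⊤ := by
  contrapose! hK
  refine sInf_eq_top.mpr ?_
  rintro _ ⟨c, hc, rfl⟩
  exact hK c hc

theorem exists_latticeWidth_eq_of_dominating {ι : Type*} [Finite ι] {c : ι → Fin n → ℤ}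
    {w : ι → ℝ} (hc : ∀ i, c i ≠ 0) (hle : ∀ i, widthAlong K (fun q => (c i q : ℝ)) ≤ w i)
    (hdom : ∀ d : Fin n → ℤ, d ≠ 0 → widthAlong K (fun q => (d q : ℝ)) ≠ ⊤ →
      ∃ i, (w i : EReal) ≤ widthAlong K fun q => (d q : ℝ))
    (hK : latticeWidth K ≠ ⊤) :
    ∃ i, latticeWidth K = w i ∧ latticeWidth K = widthAlong K fun q => (c i q : ℝ) := by
  obtain ⟨d₀, hd₀, hd₀K⟩ := exists_widthAlong_ne_top hK
  have : Nonempty ι := (hdom d₀ hd₀ hd₀K).nonempty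
  obtain ⟨i, hi⟩ := Finite.exists_min w
  have hwi : (w i : EReal) ≤ latticeWidth K := by
    refine le_sInf ?_
    rintro _ ⟨d, hd, rfl⟩
    rcases eq_or_ne (widthAlong K fun q => (d q : ℝ)) ⊤ with hd_top | hd_top
    · exact hd_top ▸ le_top
    · obtain ⟨k, hk⟩ := hdom d hd hd_top
      exact (EReal.coe_le_coe_iff.mpr (hi k)).trans hk
  have hKi := latticeWidth_le_widthAlong (K := K) (hc i)
  exact ⟨i, (hKi.trans (hle i)).antisymm hwi, hKi.antisymm ((hle i).trans hwi)⟩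

theorem one_le_dim_of_latticeWidth_ne_top {K : Set (Fin n → ℝ)} (hK : latticeWidth K ≠ ⊤) :
    1 ≤ n := by
  obtain ⟨c, hc, -⟩ := exists_widthAlong_ne_top hK
  exact Nat.one_le_iff_ne_zero.mpr fun h => hc (by subst h; exact Subsingleton.elim _ _)

end LatticeWidth

section ParametricPolyhedra

variable {m n : ℕ} {A : Matrix (Fin m) (Fin n) ℚ}

theorem widthAlong_Pb_le_of_mem_widthCone {f g : RowBasis A} {c : Fin n → ℤ}
    (hc : c ∈ widthCone A f g) (b : Fin m → ℝ) :
    widthAlong (Pb A b) (fun q => (c q : ℝ)) ≤ ((∑ q, (c q : ℝ) *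
      (applyRat (basicSolution A f) b q - applyRat (basicSolution A g) b q) : ℝ) : EReal) := by
  simp only [mul_sub, Finset.sum_sub_distrib]
  exact widthAlong_le_coe_sub fun x hx =>
    le_sum_mul_and_sum_mul_le_of_mem_widthCone f.2 g.2 hc hx

theorem exists_mem_widthCone_le_widthAlong (hrank : A.rank = n) {b : Fin m → ℝ}
    (hb : (Pb A b).Nonempty) {c : Fin n → ℤ}
    (hc : widthAlong (Pb A b) (fun q => (c q : ℝ)) ≠ ⊤) :
    ∃ f g : RowBasis A, c ∈ widthCone A f g ∧ ((∑ q, (c q : ℝ) *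
      (applyRat (basicSolution A f) b q - applyRat (basicSolution A g) b q) : ℝ) : EReal) ≤
        widthAlong (Pb A b) fun q => (c q : ℝ) := by
  obtain ⟨lo, hi, hbounds, hwidth⟩ := exists_bounds_of_widthAlong_ne_top hb hc
  obtain ⟨f, hf, hfle⟩ := exists_rowBasis_sum_mul_le hrank hb fun x hx => (hbounds x hx).2
  obtain ⟨g, hg, hgle⟩ := exists_rowBasis_sum_mul_le (c := -c) (δ := -lo) hrank hb fun x hx => by
    simpa using (hbounds x hx).1
  refine ⟨f, g, ⟨hf, hg⟩, ?_⟩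
  rw [hwidth, EReal.coe_le_coe_iff]
  simp only [mul_sub, Finset.sum_sub_distrib]
  simp only [Pi.neg_apply, Int.cast_neg, neg_mul, Finset.sum_neg_distrib, neg_le_neg_iff] at hgle
  linarith

theorem exists_mem_minimizingSet_le_widthAlong (hrank : A.rank = n)
    {T : RowBasis A × RowBasis A → Finset (Fin n → ℤ)}
    (hT : ∀ p, IsMinimizingSet (widthCone A p.1 p.2) (T p)) {b : Fin m → ℝ}
    (hb : (Pb A b).Nonempty) {c : Fin n → ℤ} (hc0 : c ≠ 0)
    (hc : widthAlong (Pb A b) (fun q => (c q : ℝ)) ≠ ⊤) :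
    ∃ p, ∃ s ∈ T p, ((∑ q, (s q : ℝ) * (applyRat (basicSolution A p.1) b q -
      applyRat (basicSolution A p.2) b q) : ℝ) : EReal) ≤
        widthAlong (Pb A b) fun q => (c q : ℝ) := by
  obtain ⟨f, g, hcfg, hle⟩ := exists_mem_widthCone_le_widthAlong hrank hb hc
  obtain ⟨x, hx⟩ := hb
  let gap : (Fin n → ℤ) →+ ℝ := (Fintype.linearCombination ℤ fun q =>
    applyRat (basicSolution A f) b q - applyRat (basicSolution A g) b q).toAddMonoidHom
  have hgap (d : Fin n → ℤ) : gap d = ∑ q, (d q : ℝ) *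
      (applyRat (basicSolution A f) b q - applyRat (basicSolution A g) b q) := by
    simp [gap, Fintype.linearCombination_apply]
  obtain ⟨s, hs, hsc⟩ := (hT (f, g)).exists_le gap (fun d hd => by
    obtain ⟨hlo, hhi⟩ := le_sum_mul_and_sum_mul_le_of_mem_widthCone f.2 g.2 hd hx
    rw [hgap]
    simp only [mul_sub, Finset.sum_sub_distrib]
    linarith) c hcfg hc0
  rw [hgap, hgap] at hsc
  exact ⟨(f, g), s, hs, (EReal.coe_le_coe_iff.mpr hsc).trans hle⟩

theorem card_sigma_rowBasis_le {ι : Type*} {T : RowBasis A × RowBasis A → Finset ι} {N : ℕ}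
    (hT : ∀ p, (T p).card ≤ (2 * n) ^ n * N) :
    (Finset.univ.sigma T).card ≤ 2 * m ^ (2 * n) * (2 * n + 1) ^ n * N := by
  have hcard : Fintype.card (RowBasis A) ≤ m ^ n :=
    (Fintype.card_subtype_le _).trans_eq (by simp)
  calc (Finset.univ.sigma T).card ≤ Fintype.card (RowBasis A × RowBasis A) * ((2 * n) ^ n * N) := by
        rw [Finset.card_sigma]
        exact Finset.sum_le_card_nsmul _ _ _ fun p _ => hT p
    _ ≤ m ^ (2 * n) * ((2 * n + 1) ^ n * N) := by
        rw [Fintype.card_prod, show m ^ (2 * n) = m ^ n * m ^ n by ring]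
        gcongr
        omega
    _ ≤ 2 * (m ^ (2 * n) * ((2 * n + 1) ^ n * N)) := Nat.le_mul_of_pos_left _ two_pos
    _ = 2 * m ^ (2 * n) * (2 * n + 1) ^ n * N := by ring

end ParametricPolyhedra

/-- Lemma 3.  For a full-column-rank matrix `A ∈ ℚ^{m×n}` defining a
parametric polyhedron of finite lattice width, there exist at most
`2 m^{2n} (2n+1)ⁿ (24 n⁵ φ)^{n-1}` triples `(Fᵢ, Gᵢ, cᵢ)` of rational linear maps and
nonzero integral directions such that, for every `b` with `P_b ≠ ∅`, each `cᵢ Gᵢ b` and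
`cᵢ Fᵢ b` bound `cᵢ·x` on `P_b` from below and above, and the lattice width of `P_b` is
`min_i cᵢ (Fᵢ - Gᵢ) b`, attained along one of the directions `cᵢ`. -/
theorem width_directions_of_parametric_polyhedron {m n : ℕ}
    (A : Matrix (Fin m) (Fin n) ℚ) (hrank : A.rank = n)
    (hfin : ∀ b : Fin m → ℝ, (Pb A b).Nonempty → latticeWidth (Pb A b) ≠ ⊤)
    (φ : ℕ) (hφ : φ = Finset.univ.sup fun j : Fin n => vecSize fun i : Fin m => A i j) :
    ∃ (t : ℕ) (F G : Fin t → Matrix (Fin n) (Fin m) ℚ) (c : Fin t → Fin n → ℤ),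
      t ≤ 2 * m ^ (2 * n) * (2 * n + 1) ^ n * (24 * n ^ 5 * φ) ^ (n - 1) ∧
      (∀ i, c i ≠ 0) ∧
      ∀ b : Fin m → ℝ, (Pb A b).Nonempty →
        (∀ i, ∀ x ∈ Pb A b,
          (∑ q, (c i q : ℝ) * applyRat (G i) b q) ≤ ∑ q, (c i q : ℝ) * x q ∧
          (∑ q, (c i q : ℝ) * x q) ≤ ∑ q, (c i q : ℝ) * applyRat (F i) b q) ∧
        (∀ i, latticeWidth (Pb A b) ≤
          ((∑ q, (c i q : ℝ) * (applyRat (F i) b q - applyRat (G i) b q) : ℝ) : EReal)) ∧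
        (∃ i, latticeWidth (Pb A b) =
          ((∑ q, (c i q : ℝ) * (applyRat (F i) b q - applyRat (G i) b q) : ℝ) : EReal) ∧
          latticeWidth (Pb A b) = widthAlong (Pb A b) (fun q => (c i q : ℝ))) := by
  have hn := one_le_dim_of_latticeWidth_ne_top (hfin 0 ⟨0, fun i => by simp⟩)
  have hcol (j) : vecSize (fun i => A i j) ≤ φ :=
    hφ ▸ Finset.le_sup (f := fun j => vecSize fun i => A i j) (Finset.mem_univ j)
  have hnφ : n ≤ φ :=
    ((hrank.symm.trans_le A.rank_le_height).trans (Nat.le_add_right m _)).trans (hcol ⟨0, hn⟩)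
  choose T hT hTcard using fun p : RowBasis A × RowBasis A =>
    exists_isMinimizingSet_widthCone hn hnφ hcol p.1.2 p.2.2
  let e := (Finset.univ.sigma T).equivFin.symm
  have hmem (i) : (e i).1.2 ∈ T (e i).1.1 := (Finset.mem_sigma.mp (e i).2).2
  have hne (i) : (e i).1.2 ≠ 0 := (hT _).ne_zero _ (hmem i)
  have hcone (i) := (hT _).mem _ (hmem i)
  refine ⟨_, fun i => basicSolution A (e i).1.1.1, fun i => basicSolution A (e i).1.1.2,
    fun i => (e i).1.2, card_sigma_rowBasis_le hTcard, hne, fun b hb => ?_⟩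
  have hle (i) := widthAlong_Pb_le_of_mem_widthCone (hcone i) b
  refine ⟨fun i x hx => le_sum_mul_and_sum_mul_le_of_mem_widthCone
      (e i).1.1.1.2 (e i).1.1.2.2 (hcone i) hx,
    fun i => (latticeWidth_le_widthAlong (hne i)).trans (hle i),
    exists_latticeWidth_eq_of_dominating hne hle (fun d hd hd_top => ?_) (hfin b hb)⟩
  obtain ⟨p, s, hs, hsd⟩ := exists_mem_minimizingSet_le_widthAlong hrank hT hb hd hd_top
  refine ⟨e.symm ⟨⟨p, s⟩, Finset.mem_sigma.mpr ⟨Finset.mem_univ p, hs⟩⟩, ?_⟩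
  simpa only [e.apply_symm_apply] using hsd
end

section
/- Let A ∈ ℚ^{m×n} be a matrix of full column rank defining a parametric polyhedron P of finite lattice width, and let Q ⊆ ℝ^m be a rational partially open polyhedron such that P_b is nonempty for all b ∈ Q. Then there exist a finite partition of Q into sets S₁, …, S_t, natural numbers l₁, …, l_t, rational partially open polyhedra S'_i ⊆ ℝ^{m + l_i} with S_i = S'_i / ℤ^{l_i}, and for each i finitely many unimodular matrices U_{ij} ∈ ℤ^{n×n} and rational affine maps T_{ij} : ℝ^m → ℝⁿ (j = 1, …, k_i), such that for every b ∈ S_i: P_b ∩ ℤⁿ ≠ ∅ if and only if U_{ij} ⌈T_{ij} b⌉ ∈ P_b for some index j, where ⌈·⌉ denotes componentwise rounding up. -/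
open Matrix Set

/-- A rational partially open polyhedron: an intersection of finitely many closed or
open halfspaces with rational data. -/
def IsRatPOPolyhedron {d : ℕ} (S : Set (Fin d → ℝ)) : Prop :=
  ∃ (k : ℕ) (a : Fin k → Fin d → ℚ) (β : Fin k → ℚ) (strict : Fin k → Bool),
    S = {x | ∀ i, if strict i then (∑ j, (a i j : ℝ) * x j) < (β i : ℝ)
                  else (∑ j, (a i j : ℝ) * x j) ≤ (β i : ℝ)}

/-!
Suppose `P_b` contains an integer point `z`, let `x` be any point of `P_b`, and put `u = z - x`.
Some integer vector `h` within bounded distance of `u` has `A h` coordinatewise between `0` and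
`A u`; then `z - h` is an integer point of `P_b`, and its distance to `x` is bounded by a constant
depending only on `A`. To find `h`, take for each sign pattern of a vector `A u` an integer vector
`g` realizing it, subtract from `u` the largest multiple `t g` that keeps `A (u - t g)` between `0`
and `A u`, and round `t` down: every such step kills a coordinate of `A u`.

A minimal face of `P_b` is an affine subspace cut out by turning some inequalities into equations,
so `x` can be taken among finitely many rational linear functions `T_I b`. Hence if `P_b` has an
integer point, it has one of the form `⌈T_I b⌉ + d = ⌈T_I b + d⌉` with `d` in a fixed finite set of
integer vectors. One cell `S₁ = Q`, with `l₁ = 0` and every `U₁ⱼ = 1`, suffices.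
-/

section CoordinatewiseOrder

variable {ι G : Type*} [AddCommGroup G] [LinearOrder G] [IsOrderedAddMonoid G]

lemma add_mem_uIcc_zero {a x p q : G} (hp : p ∈ uIcc 0 (a - x)) (hq : q ∈ uIcc 0 x)
    (hx : x ∈ uIcc 0 a) : p + q ∈ uIcc 0 a := by
  rw [mem_uIcc] at *
  grind

lemma mem_uIcc_pi_iff {α : Type*} [Lattice α] {a b x : ι → α} :
    x ∈ uIcc a b ↔ ∀ i, x i ∈ uIcc (a i) (b i) := by
  simp only [← pi_univ_uIcc, mem_univ_pi]

lemma sub_le_of_mem_uIcc_zero {b x z h : ι → G} (hx : x ≤ b) (hz : z ≤ b)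
    (hh : h ∈ uIcc 0 (z - x)) : z - h ≤ b := fun i ↦ by
  have hxi := hx i
  have hzi := hz i
  have hhi := mem_uIcc.1 (mem_uIcc_pi_iff.1 hh i)
  simp only [Pi.zero_apply, Pi.sub_apply] at hhi ⊢
  grind

lemma mem_uIcc_zero_of_sign_eq_of_abs_le {x a : G} (hsign : SignType.sign x = SignType.sign a)
    (habs : |x| ≤ |a|) : x ∈ uIcc 0 a := by
  rcases lt_trichotomy a 0 with ha | rfl | ha
  · have hx : x < 0 := by rwa [← sign_eq_neg_one_iff, hsign, sign_eq_neg_one_iff]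
    rw [abs_of_neg hx, abs_of_neg ha, neg_le_neg_iff] at habs
    exact mem_uIcc_of_ge habs hx.le
  · simp_all
  · have hx : 0 < x := by rwa [← sign_eq_one_iff, hsign, sign_eq_one_iff]
    rw [abs_of_pos hx, abs_of_pos ha] at habs
    exact mem_uIcc_of_le hx.le habs

end CoordinatewiseOrder

section ScalarMultiples

variable {R ι : Type*} [LinearOrder R]

lemma mul_mem_uIcc_zero_mul [Ring R] [IsStrictOrderedRing R] {s t : R} (hs : 0 ≤ s)
    (hst : s ≤ t) (c : R) : s * c ∈ uIcc 0 (t * c) := by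
  rcases le_total 0 c with hc | hc
  · exact mem_uIcc_of_le (mul_nonneg hs hc) (mul_le_mul_of_nonneg_right hst hc)
  · exact mem_uIcc_of_ge (mul_le_mul_of_nonpos_right hst hc) (mul_nonpos_of_nonneg_of_nonpos hs hc)

lemma add_floor_smul_mem_uIcc_zero [Ring R] [IsStrictOrderedRing R] [FloorRing R]
    {a c p : ι → R} {t : R} (ht : 0 ≤ t) (hp : p ∈ uIcc 0 (a - t • c))
    (htc : t • c ∈ uIcc 0 a) : p + (⌊t⌋ : R) • c ∈ uIcc 0 a := by
  rw [mem_uIcc_pi_iff] at hp htc ⊢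
  exact fun i ↦ add_mem_uIcc_zero (hp i)
    (mul_mem_uIcc_zero_mul (Int.cast_nonneg (Int.floor_nonneg.2 ht)) (Int.floor_le t) (c i)) (htc i)

variable [Field R] [IsStrictOrderedRing R]

lemma exists_add_smul_le [Finite ι] {a b d : ι → R} (hab : a ≤ b) (hd : ∃ i, 0 < d i) :
    ∃ t : R, 0 ≤ t ∧ a + t • d ≤ b ∧ ∃ i, 0 < d i ∧ (a + t • d) i = b i := by
  obtain ⟨i₀, hi₀, hmin⟩ :=
    Set.exists_min_image {i | 0 < d i} (fun i ↦ (b i - a i) / d i) (Set.toFinite _) hd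
  have ht : 0 ≤ (b i₀ - a i₀) / d i₀ := div_nonneg (sub_nonneg.2 (hab i₀)) (le_of_lt hi₀)
  refine ⟨(b i₀ - a i₀) / d i₀, ht, fun i ↦ ?_, i₀, hi₀, ?_⟩
  · rcases lt_or_ge 0 (d i) with hi | hi
    · have := (le_div_iff₀ hi).1 (hmin i hi)
      simp only [Pi.add_apply, Pi.smul_apply, smul_eq_mul]
      linarith
    · have := mul_nonpos_of_nonneg_of_nonpos ht hi
      simp only [Pi.add_apply, Pi.smul_apply, smul_eq_mul]
      linarith [hab i]
  · simp only [Pi.add_apply, Pi.smul_apply, smul_eq_mul]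
    rw [div_mul_cancel₀ _ (ne_of_gt hi₀), add_sub_cancel]

lemma exists_smul_mem_uIcc_zero [Finite ι] {a c : ι → R}
    (hsign : SignType.sign ∘ c = SignType.sign ∘ a) (ha : a ≠ 0) :
    ∃ t : R, 0 ≤ t ∧ t • c ∈ uIcc 0 a ∧ Function.support (a - t • c) ⊂ Function.support a := by
  have hsign' (i : ι) : SignType.sign (c i) = SignType.sign (a i) := congrFun hsign i
  have hzero (i : ι) : c i = 0 ↔ a i = 0 := by
    rw [← sign_eq_zero_iff, hsign', sign_eq_zero_iff]
  obtain ⟨j, hj⟩ := Function.ne_iff.1 ha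
  obtain ⟨t, ht, hle, i, hi, heq⟩ :=
    exists_add_smul_le (a := 0) (b := |a|) (d := |c|) (abs_nonneg a)
      ⟨j, abs_pos.2 ((hzero j).not.2 hj)⟩
  have hai : a i ≠ 0 := (hzero i).not.1 (abs_pos.1 hi)
  have htpos : 0 < t := ht.lt_of_ne fun h ↦ hai <| by simpa [← h, eq_comm] using heq
  have habs (k : ι) : |t * c k| = (0 + t • |c|) k := by
    simp [abs_mul, abs_of_nonneg ht]
  have htsign (k : ι) : SignType.sign (t * c k) = SignType.sign (a k) := by
    rw [sign_mul, sign_pos htpos, one_mul, hsign']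
  have htci : t * c i = a i :=
    calc t * c i = SignType.sign (t * c i) * |t * c i| := (sign_mul_abs _).symm
      _ = SignType.sign (a i) * |a i| := by rw [htsign, (habs i).trans heq, Pi.abs_apply]
      _ = a i := sign_mul_abs _
  refine ⟨t, ht, mem_uIcc_pi_iff.2 fun k ↦
    mem_uIcc_zero_of_sign_eq_of_abs_le (htsign k) ((habs k).trans_le (hle k)), fun k hk hak ↦ ?_,
    fun h ↦ h hai (sub_eq_zero.2 htci.symm)⟩
  exact hk (by simp [hak, (hzero k).2 hak])

end ScalarMultiples

section GeneralizedInverse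

variable {K ι κ : Type*} [Field K] [Fintype κ]

lemma exists_mul_mul_eq_self [Fintype ι] (A : Matrix ι κ K) :
    ∃ G : Matrix κ ι K, A * G * A = A := by
  classical
  obtain ⟨g, hg⟩ :=
    A.mulVecLin.rangeRestrict.exists_rightInverse_of_surjective A.mulVecLin.range_rangeRestrict
  obtain ⟨g', hg'⟩ := g.exists_extend
  refine ⟨LinearMap.toMatrix' g', Matrix.toLin'.injective (LinearMap.ext fun x ↦ ?_)⟩
  have hx : g' (A *ᵥ x) = g ⟨A *ᵥ x, x, rfl⟩ := LinearMap.congr_fun hg' ⟨A *ᵥ x, x, rfl⟩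
  have hgx : A *ᵥ g ⟨A *ᵥ x, x, rfl⟩ = A *ᵥ x :=
    congrArg Subtype.val (LinearMap.congr_fun hg ⟨A *ᵥ x, x, rfl⟩)
  rw [Matrix.toLin'_mul, Matrix.toLin'_mul, Matrix.toLin'_toMatrix']
  simp only [LinearMap.comp_apply, Matrix.toLin'_apply, hx, hgx]

lemma exists_kernel_projection [Finite ι] {L : Type*} [Ring L] (f : K →+* L)
    (A : Matrix ι κ K) :
    ∃ P : Matrix κ κ K, A * P = 0 ∧ ∀ u : κ → L, A.map f *ᵥ u = 0 → P.map f *ᵥ u = u := by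
  classical
  cases nonempty_fintype ι
  obtain ⟨G, hG⟩ := exists_mul_mul_eq_self A
  refine ⟨1 - G * A, ?_, fun u hu ↦ ?_⟩
  · rw [Matrix.mul_sub, Matrix.mul_one, ← Matrix.mul_assoc, hG, sub_self]
  · rw [Matrix.map_sub f (map_sub f), Matrix.map_mul, Matrix.map_one f f.map_zero f.map_one,
      Matrix.sub_mulVec, Matrix.one_mulVec, ← Matrix.mulVec_mulVec, hu, Matrix.mulVec_zero,
      sub_zero]

end GeneralizedInverse

section IntegerVectors

lemma exists_pos_smul_eq_intCast {κ : Type*} [Finite κ] (w : κ → ℚ) :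
    ∃ N : ℚ, 0 < N ∧ ∃ g : κ → ℤ, N • w = Int.cast ∘ g := by
  obtain ⟨⟨N, hN⟩, hg⟩ := IsLocalization.exist_integer_multiples_of_finite (Submonoid.pos ℤ) w
  choose g hg using hg
  exact ⟨N, Int.cast_pos.2 hN, g, funext fun j ↦ by simpa using (hg j).symm⟩

variable {ι κ : Type*} [Finite ι] [Fintype κ]

lemma exists_rat_sign_mulVec_eq (A : Matrix ι κ ℚ) (u : κ → ℝ) :
    ∃ w : κ → ℚ, SignType.sign ∘ (A *ᵥ w) = SignType.sign ∘ (A.map (Rat.castHom ℝ) *ᵥ u) := by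
  set a := A.map (Rat.castHom ℝ) *ᵥ u
  -- Coordinates in which `A u` vanishes must stay zero when `u` is perturbed to a rational vector,
  -- so the perturbation is projected to their common kernel.
  obtain ⟨P, hAP, hP⟩ := exists_kernel_projection (Rat.castHom ℝ)
    (A.submatrix ((↑) : {i // a i = 0} → ι) id)
  have hAPu : (A * P).map (Rat.castHom ℝ) *ᵥ u = a := by
    rw [Matrix.map_mul, ← Matrix.mulVec_mulVec, hP u (funext fun i ↦ i.2)]
  have hnear : ∀ᶠ y in nhds u, ∀ i,
      SignType.sign (((A * P).map (Rat.castHom ℝ) *ᵥ y) i) = SignType.sign (a i) := by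
    refine Filter.eventually_all.2 fun i ↦ ?_
    by_cases hi : a i = 0
    · have hrow : (A * P) i = 0 := congrFun hAP ⟨i, hi⟩
      simp [hi, Matrix.mulVec, dotProduct, hrow]
    · have hcont : Continuous fun y ↦ ((A * P).map (Rat.castHom ℝ) *ᵥ y) i := by fun_prop
      have hlim := hcont.tendsto u
      rw [hAPu] at hlim
      exact ((continuousAt_sign_of_ne_zero hi).tendsto.comp hlim).eventually_mem
        (mem_nhds_discrete.2 (mem_singleton _))
  obtain ⟨y, hy⟩ := (DenseRange.piMap fun _ : κ ↦ Rat.denseRange_cast (𝕜 := ℝ)).mem_nhds hnear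
  refine ⟨P *ᵥ y, funext fun i ↦ ?_⟩
  calc SignType.sign ((A *ᵥ P *ᵥ y) i)
      = SignType.sign (Rat.castHom ℝ (((A * P) *ᵥ y) i)) := by
        rw [Matrix.mulVec_mulVec, Rat.cast_strictMono.sign_comp]
    _ = SignType.sign (a i) := by rw [RingHom.map_mulVec]; exact hy i

lemma exists_int_sign_mulVec_eq (A : Matrix ι κ ℚ) (u : κ → ℝ) :
    ∃ g : κ → ℤ, SignType.sign ∘ (A.map (Rat.castHom ℝ) *ᵥ (Int.cast ∘ g)) =
      SignType.sign ∘ (A.map (Rat.castHom ℝ) *ᵥ u) := by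
  obtain ⟨w, hw⟩ := exists_rat_sign_mulVec_eq A u
  obtain ⟨N, hN, g, hg⟩ := exists_pos_smul_eq_intCast w
  refine ⟨g, hw ▸ funext fun i ↦ ?_⟩
  have hcast : (Int.cast ∘ g : κ → ℝ) = Rat.castHom ℝ ∘ (N • w) := by
    rw [hg]
    ext j
    simp
  calc SignType.sign ((A.map (Rat.castHom ℝ) *ᵥ (Int.cast ∘ g)) i)
      = SignType.sign (Rat.castHom ℝ ((A *ᵥ (N • w)) i)) := by rw [hcast, RingHom.map_mulVec]
    _ = SignType.sign ((A *ᵥ w) i) := by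
      rw [Rat.cast_strictMono.sign_comp, Matrix.mulVec_smul, Pi.smul_apply, smul_eq_mul,
        sign_mul, sign_pos hN, one_mul]

lemma exists_bounded_int_sign_mulVec_eq (A : Matrix ι κ ℚ) :
    ∃ M : ℝ, ∀ u : κ → ℝ, ∃ g : κ → ℤ, ‖(Int.cast ∘ g : κ → ℝ)‖ ≤ M ∧
      SignType.sign ∘ (A.map (Rat.castHom ℝ) *ᵥ (Int.cast ∘ g)) =
        SignType.sign ∘ (A.map (Rat.castHom ℝ) *ᵥ u) := by
  choose g hg using exists_int_sign_mulVec_eq A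
  let σ (u : κ → ℝ) : ι → SignType := SignType.sign ∘ (A.map (Rat.castHom ℝ) *ᵥ u)
  obtain ⟨M, hM⟩ := Finite.exists_le fun s ↦ ‖(Int.cast ∘ g (rangeSplitting σ s) : κ → ℝ)‖
  refine ⟨M, fun u ↦ ⟨_, hM ⟨σ u, u, rfl⟩, (hg _).trans ?_⟩⟩
  exact apply_rangeSplitting σ ⟨σ u, u, rfl⟩

lemma norm_sub_add_floor_smul_le {E : Type*} [NormedAddCommGroup E] [NormedSpace ℝ E]
    (u c h : E) (t : ℝ) : ‖u - (h + (⌊t⌋ : ℝ) • c)‖ ≤ ‖u - t • c - h‖ + ‖c‖ := by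
  have hsplit : u - (h + (⌊t⌋ : ℝ) • c) = (u - t • c - h) + Int.fract t • c := by
    rw [← Int.self_sub_floor]
    module
  rw [hsplit]
  refine (norm_add_le _ _).trans (add_le_add_right ?_ _)
  rw [norm_smul, Real.norm_of_nonneg (Int.fract_nonneg t)]
  exact mul_le_of_le_one_left (norm_nonneg c) (Int.fract_lt_one t).le

lemma exists_int_mulVec_mem_uIcc_of_injective {A : Matrix ι κ ℝ}
    (hA : Function.Injective A.mulVec) {M : ℝ}
    (hM : ∀ u : κ → ℝ, ∃ g : κ → ℤ, ‖(Int.cast ∘ g : κ → ℝ)‖ ≤ M ∧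
      SignType.sign ∘ (A *ᵥ (Int.cast ∘ g)) = SignType.sign ∘ (A *ᵥ u)) (u : κ → ℝ) :
    ∃ h : κ → ℤ, A *ᵥ (Int.cast ∘ h) ∈ uIcc 0 (A *ᵥ u) ∧
      ‖u - Int.cast ∘ h‖ ≤ (Function.support (A *ᵥ u)).ncard * M := by
  induction hN : (Function.support (A *ᵥ u)).ncard using Nat.strong_induction_on
    generalizing u with
  | _ N ih =>
  subst hN
  by_cases hu : A *ᵥ u = 0
  · have hu' : u = 0 := hA (hu.trans A.mulVec_zero.symm)
    have hcast : (Int.cast ∘ (0 : κ → ℤ) : κ → ℝ) = 0 := funext fun _ ↦ Int.cast_zero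
    exact ⟨0, by simp [hcast, hu'], by simp [hcast, hu']⟩
  obtain ⟨g, hgM, hg⟩ := hM u
  obtain ⟨t, ht, htg, hsupp⟩ := exists_smul_mem_uIcc_zero hg hu
  set c : κ → ℝ := Int.cast ∘ g with hc
  rw [← Matrix.mulVec_smul, ← Matrix.mulVec_sub] at hsupp
  have hlt := ncard_lt_ncard hsupp
  obtain ⟨h, hmem, hnorm⟩ := ih _ hlt _ rfl
  have hcast : (Int.cast ∘ (h + ⌊t⌋ • g) : κ → ℝ) = Int.cast ∘ h + (⌊t⌋ : ℝ) • c := by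
    ext j
    simp [hc]
  refine ⟨h + ⌊t⌋ • g, ?_, ?_⟩
  · rw [hcast, Matrix.mulVec_add, Matrix.mulVec_smul]
    rw [Matrix.mulVec_sub, Matrix.mulVec_smul] at hmem
    exact add_floor_smul_mem_uIcc_zero ht hmem htg
  · have hM₀ : 0 ≤ M := (norm_nonneg c).trans hgM
    have hle : ((Function.support (A *ᵥ (u - t • c))).ncard : ℝ) + 1 ≤
        (Function.support (A *ᵥ u)).ncard := by exact_mod_cast hlt
    calc ‖u - Int.cast ∘ (h + ⌊t⌋ • g)‖
        ≤ ‖u - t • c - Int.cast ∘ h‖ + ‖c‖ := hcast ▸ norm_sub_add_floor_smul_le u c _ t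
      _ ≤ (Function.support (A *ᵥ (u - t • c))).ncard * M + M := add_le_add hnorm hgM
      _ = ((Function.support (A *ᵥ (u - t • c))).ncard + 1) * M := by ring
      _ ≤ (Function.support (A *ᵥ u)).ncard * M := by gcongr

theorem exists_int_mulVec_mem_uIcc (A : Matrix ι κ ℚ) :
    ∃ K : ℝ, ∀ u : κ → ℝ, ∃ h : κ → ℤ,
      A.map (Rat.castHom ℝ) *ᵥ (Int.cast ∘ h) ∈ uIcc 0 (A.map (Rat.castHom ℝ) *ᵥ u) ∧
        ‖u - Int.cast ∘ h‖ ≤ K := by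
  classical
  -- Appending the rows of the identity matrix makes the matrix injective.
  let B : Matrix (ι ⊕ κ) κ ℚ := Matrix.fromRows A 1
  have hB (u : κ → ℝ) :
      B.map (Rat.castHom ℝ) *ᵥ u = Sum.elim (A.map (Rat.castHom ℝ) *ᵥ u) u := by
    rw [Matrix.fromRows_map, Matrix.map_one _ (map_zero _) (map_one _), Matrix.fromRows_mulVec,
      Matrix.one_mulVec]
  obtain ⟨M, hM⟩ := exists_bounded_int_sign_mulVec_eq B
  have hinj : Function.Injective (B.map (Rat.castHom ℝ)).mulVec := fun u v huv ↦ by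
    rw [hB, hB] at huv
    exact congrArg (· ∘ Sum.inr) huv
  refine ⟨Nat.card (ι ⊕ κ) * M, fun u ↦ ?_⟩
  obtain ⟨h, hmem, hnorm⟩ := exists_int_mulVec_mem_uIcc_of_injective hinj hM u
  refine ⟨h, ?_, hnorm.trans ?_⟩
  · rw [hB, hB, mem_uIcc_pi_iff] at hmem
    exact mem_uIcc_pi_iff.2 fun i ↦ hmem (Sum.inl i)
  · obtain ⟨g, hg, -⟩ := hM 0
    have := (norm_nonneg _).trans hg
    gcongr
    exact ncard_le_card _

end IntegerVectors

section BasicSolutions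

variable {K R ι κ : Type*} [Field K] [Field R] [LinearOrder R] [IsStrictOrderedRing R]
  [Fintype κ]

lemma exists_forall_tight_imp_mulVec_le [Finite ι] {A : Matrix ι κ R} {b : ι → R}
    (hne : ∃ x, A *ᵥ x ≤ b) :
    ∃ x, ∀ y, (∀ i, (A *ᵥ x) i = b i → (A *ᵥ y) i = b i) → A *ᵥ y ≤ b := by
  let tight (x : κ → R) : Set ι := {i | (A *ᵥ x) i = b i}
  obtain ⟨x, hx, hmax⟩ :=
    Set.Finite.exists_maximalFor' tight {x | A *ᵥ x ≤ b} (toFinite _) hne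
  refine ⟨x, fun y hy ↦ by_contra fun hyb ↦ ?_⟩
  have hd (i : ι) : (A *ᵥ (y - x)) i = (A *ᵥ y) i - (A *ᵥ x) i := by
    rw [Matrix.mulVec_sub, Pi.sub_apply]
  have hdpos : ∃ i, 0 < (A *ᵥ (y - x)) i := by
    obtain ⟨i, hi⟩ := not_forall.1 hyb
    exact ⟨i, (hd i).symm ▸ sub_pos.2 ((hx i).trans_lt (not_le.1 hi))⟩
  have hdtight {i : ι} (hi : i ∈ tight x) : (A *ᵥ (y - x)) i = 0 := by
    rw [hd, hy i hi, hi, sub_self]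
  obtain ⟨t, -, hle, i, hi, heq⟩ := exists_add_smul_le hx hdpos
  have hline : A *ᵥ (x + t • (y - x)) = A *ᵥ x + t • A *ᵥ (y - x) := by
    rw [Matrix.mulVec_add, Matrix.mulVec_smul]
  have hsub : tight x ⊆ tight (x + t • (y - x)) := fun k hk ↦
    calc (A *ᵥ (x + t • (y - x))) k = (A *ᵥ x) k + t * (A *ᵥ (y - x)) k := congrFun hline k
      _ = b k := by rw [hdtight hk, mul_zero, add_zero, hk]
  have hi' : i ∈ tight x := hmax (hline.trans_le hle) hsub ((congrFun hline i).trans heq)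
  exact hi.ne' (hdtight hi')

lemma exists_finite_solution_operators [Fintype ι] (f : K →+* R) (A : Matrix ι κ K) :
    ∃ T : Set ι → Matrix κ ι K, ∀ b : ι → R, (∃ x, A.map f *ᵥ x ≤ b) →
      ∃ I, A.map f *ᵥ (T I).map f *ᵥ b ≤ b := by
  classical
  let D (I : Set ι) : Matrix ι ι K := Matrix.diagonal (I.indicator 1)
  have hD (I : Set ι) (a : ι → R) : (D I).map f *ᵥ a = I.indicator a := by
    ext i
    by_cases hi : i ∈ I <;> simp [D, Matrix.diagonal_map, Matrix.mulVec_diagonal, hi]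
  choose G hG using fun I ↦ exists_mul_mul_eq_self (D I * A)
  refine ⟨fun I ↦ G I * D I, fun b hne ↦ ?_⟩
  obtain ⟨x, hx⟩ := exists_forall_tight_imp_mulVec_le hne
  let I : Set ι := {i | (A.map f *ᵥ x) i = b i}
  refine ⟨I, hx _ fun i (hi : i ∈ I) ↦ ?_⟩
  have hDb : (D I).map f *ᵥ b = (D I).map f *ᵥ A.map f *ᵥ x := by
    rw [hD, hD]
    exact indicator_congr fun k hk ↦ hk.symm
  have hDT : (D I).map f *ᵥ A.map f *ᵥ (G I * D I).map f *ᵥ b = (D I).map f *ᵥ b := by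
    have hGx := congrArg (fun B ↦ B.map f *ᵥ x) (hG I)
    simp only [Matrix.map_mul, ← Matrix.mulVec_mulVec] at hGx ⊢
    rw [hDb, hGx]
  rw [hD, hD] at hDT
  simpa only [indicator_of_mem hi] using congrFun hDT i

end BasicSolutions

section ParametricPolyhedra

lemma sub_ceil_mem_Icc {x K : ℝ} {y : ℤ} (h : |y - x| ≤ K) : y - ⌈x⌉ ∈ Icc (-⌈K⌉) ⌈K⌉ := by
  obtain ⟨hlow, hup⟩ := abs_le.1 h
  have hlow' : ((⌈x⌉ - y : ℤ) : ℝ) < (⌈K⌉ + 1 : ℤ) := by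
    push_cast
    linarith [Int.ceil_lt_add_one x, Int.le_ceil K]
  have hup' : ((y - ⌈x⌉ : ℤ) : ℝ) ≤ ⌈K⌉ := by
    push_cast
    linarith [Int.le_ceil x, Int.le_ceil K]
  rw [Int.cast_lt] at hlow'
  exact ⟨by lia, Int.cast_le.1 hup'⟩

lemma setOf_exists_append_zero_mem {α : Type*} {m : ℕ} (S : Set (Fin m → α)) (f : ℤ → α) :
    {b | ∃ z : Fin 0 → ℤ, Fin.append b (fun q ↦ f (z q)) ∈ S} = S := by
  have happend (b : Fin m → α) (z : Fin 0 → ℤ) : Fin.append b (fun q ↦ f (z q)) = b :=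
    Fin.append_right_nil _ _ rfl
  simp only [happend, exists_const, ofPred_mem_eq]

variable {m n : ℕ}

lemma mem_Pb_iff {A : Matrix (Fin m) (Fin n) ℚ} {b : Fin m → ℝ} {x : Fin n → ℝ} :
    x ∈ Pb A b ↔ A.map (Rat.castHom ℝ) *ᵥ x ≤ b :=
  Iff.rfl

lemma exists_int_mem_Pb_norm_sub_le (A : Matrix (Fin m) (Fin n) ℚ) :
    ∃ K : ℝ, ∀ (b : Fin m → ℝ) (x : Fin n → ℝ) (z : Fin n → ℤ), x ∈ Pb A b →
      Int.cast ∘ z ∈ Pb A b → ∃ y : Fin n → ℤ, Int.cast ∘ y ∈ Pb A b ∧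
        ‖(Int.cast ∘ y : Fin n → ℝ) - x‖ ≤ K := by
  obtain ⟨K, hK⟩ := exists_int_mulVec_mem_uIcc A
  refine ⟨K, fun b x z hx hz ↦ ?_⟩
  obtain ⟨h, hmem, hnorm⟩ := hK (Int.cast ∘ z - x)
  have hcast : (Int.cast ∘ (z - h) : Fin n → ℝ) = Int.cast ∘ z - Int.cast ∘ h := by
    ext j
    simp
  refine ⟨z - h, ?_, ?_⟩
  · rw [mem_Pb_iff] at hx hz ⊢
    rw [hcast, Matrix.mulVec_sub]
    rw [Matrix.mulVec_sub] at hmem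
    exact sub_le_of_mem_uIcc_zero hx hz hmem
  · rwa [hcast, sub_right_comm]

theorem partitioning_theorem_general (A : Matrix (Fin m) (Fin n) ℚ) :
    ∃ (k : ℕ) (T : Fin k → Matrix (Fin n) (Fin m) ℚ) (v : Fin k → Fin n → ℚ),
      ∀ b : Fin m → ℝ, (∃ x : Fin n → ℤ, (fun q ↦ (x q : ℝ)) ∈ Pb A b) ↔
        ∃ j, (fun r ↦ (⌈(∑ s, (T j r s : ℝ) * b s) + (v j r : ℝ)⌉ : ℝ)) ∈ Pb A b := by
  obtain ⟨T, hT⟩ := exists_finite_solution_operators (Rat.castHom ℝ) A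
  obtain ⟨K, hK⟩ := exists_int_mem_Pb_norm_sub_le A
  let e := Finite.equivFin (Set (Fin m) × (Fin n → Icc (-⌈K⌉) ⌈K⌉))
  refine ⟨_, fun j ↦ T (e.symm j).1, fun j r ↦ ((e.symm j).2 r : ℤ), fun b ↦
    ⟨fun ⟨z, hz⟩ ↦ ?_, fun ⟨_, hj⟩ ↦ ⟨_, hj⟩⟩⟩
  obtain ⟨I, hI⟩ := hT b ⟨_, hz⟩
  obtain ⟨y, hy, hyx⟩ := hK b _ z hI hz
  have hd (r : Fin n) := sub_ceil_mem_Icc ((norm_le_pi_norm _ r).trans hyx)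
  refine ⟨e (I, fun r ↦ ⟨_, hd r⟩), ?_⟩
  convert hy using 1
  ext r
  have hceil (t : ℝ) : ⌈t + (y r - ⌈t⌉ : ℤ)⌉ = y r := by
    rw [Int.ceil_add_intCast, add_sub_cancel]
  simp only [Equiv.symm_apply_apply, Rat.cast_intCast]
  exact congrArg Int.cast (hceil _)

end ParametricPolyhedra

/-- Partitioning theorem, Theorem 4.  Let `A ∈ ℚ^{m×n}` have full
column rank and define a parametric polyhedron of finite lattice width, and let
`Q ⊆ ℝ^m` be a rational partially open polyhedron with `P_b ≠ ∅` for all `b ∈ Q`.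
Then `Q` can be partitioned into sets `Sᵢ`, each the integer projection
`S'ᵢ / ℤ^{lᵢ}` of a rational partially open polyhedron `S'ᵢ ⊆ ℝ^{m+lᵢ}`, equipped with
unimodular matrices `Uᵢⱼ` and rational affine maps `Tᵢⱼ` such that for all `b ∈ Sᵢ`:
`P_b` contains an integral point iff `Uᵢⱼ ⌈Tᵢⱼ b⌉ ∈ P_b` for some `j`. -/
theorem partitioning_theorem {m n : ℕ}
    (A : Matrix (Fin m) (Fin n) ℚ) (hrank : A.rank = n)
    (hfin : ∀ b : Fin m → ℝ, (Pb A b).Nonempty → latticeWidth (Pb A b) ≠ ⊤)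
    (Q : Set (Fin m → ℝ)) (hQ : IsRatPOPolyhedron Q)
    (hQne : ∀ b ∈ Q, (Pb A b).Nonempty) :
    ∃ (t : ℕ) (S : Fin t → Set (Fin m → ℝ)) (l : Fin t → ℕ)
      (S' : (i : Fin t) → Set (Fin (m + l i) → ℝ))
      (k : Fin t → ℕ)
      (U : (i : Fin t) → Fin (k i) → Matrix (Fin n) (Fin n) ℤ)
      (T : (i : Fin t) → Fin (k i) → Matrix (Fin n) (Fin m) ℚ)
      (v : (i : Fin t) → Fin (k i) → Fin n → ℚ),
      -- `S₁, …, S_t` is a partition of `Q`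
      (⋃ i, S i) = Q ∧
      (∀ i j, i ≠ j → Disjoint (S i) (S j)) ∧
      -- each `Sᵢ` is the integer projection of a rational partially open polyhedron
      (∀ i, IsRatPOPolyhedron (S' i)) ∧
      (∀ i, S i = {b | ∃ z : Fin (l i) → ℤ,
        Fin.append b (fun q => (z q : ℝ)) ∈ S' i}) ∧
      -- the matrices `Uᵢⱼ` are unimodular
      (∀ i j, IsUnit (U i j).det) ∧
      -- the characterization of integer feasibility via the candidate points
      (∀ i, ∀ b ∈ S i,
        ((∃ x : Fin n → ℤ, (fun q => (x q : ℝ)) ∈ Pb A b) ↔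
          ∃ j, (fun q => (((U i j).mulVec
              (fun r => ⌈(∑ s, (T i j r s : ℝ) * b s) + (v i j r : ℝ)⌉)) q : ℝ))
            ∈ Pb A b)) := by
  obtain ⟨k, T, v, hTv⟩ := partitioning_theorem_general A
  exact ⟨1, fun _ ↦ Q, fun _ ↦ 0, fun _ ↦ Q, fun _ ↦ k, fun _ _ ↦ 1, fun _ ↦ T, fun _ ↦ v,
    iUnion_const Q, fun i j hij ↦ (hij (Subsingleton.elim i j)).elim, fun _ ↦ hQ,
    fun _ ↦ (setOf_exists_append_zero_mem Q _).symm, fun _ _ ↦ by simp,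
    fun _ b _ ↦ by simpa only [Matrix.one_mulVec] using hTv b⟩
end
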